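/- arXiv:1204.2306 — 2 statements merged into one kernel-verified Lean document; each statement's English description precedes it below -/
import Mathlib

section
/- Let T be a 2-sparse tree with ℓ ≥ 3 leaves, and let G be any graph obtained from T by expanding each edge of T into a complete graph of arbitrary order, with n the number of vertices of G. Then λ(G^c) = n + ℓ − 3 and ρ(G^c) = ℓ − 2, where G^c denotes the complement of G. -/
namespace PaperPC

open SimpleGraph

variable {V : Type*}

/-- The degree of a vertex, via the cardinality of its neighbor set. -/
noncomputable def ndeg (G : SimpleGraph V) (v : V) : ℕ := (G.neighborSet v).ncard

/-- A linear forest: an acyclic graph of maximum degree at most 2,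
i.e. a vertex-disjoint union of paths.  A spanning linear subforest of `G`
is exactly a path covering of `G` (isolated vertices are one-vertex paths). -/
def IsLinearForest (H : SimpleGraph V) : Prop :=
  H.IsAcyclic ∧ ∀ v, ndeg H v ≤ 2

/-- The number of paths of a path covering = number of connected components. -/
noncomputable def numPaths (H : SimpleGraph V) : ℕ := Nat.card H.ConnectedComponent

/-- The path covering number `P(G)`. -/
noncomputable def pathCoverNumber (G : SimpleGraph V) : ℕ :=
  sInf {k | ∃ H ≤ G, IsLinearForest H ∧ numPaths H = k}

/-- `H` is a minimum path covering of `G`. -/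
def IsMinPathCover (G H : SimpleGraph V) : Prop :=
  H ≤ G ∧ IsLinearForest H ∧ numPaths H = pathCoverNumber G

open scoped Classical in
/-- The path sequence of a path covering: the multiset of the numbers of vertices
of its paths (a multiset encodes the nondecreasing ordered sequence). -/
noncomputable def pathSeq [Fintype V] (H : SimpleGraph V) : Multiset ℕ :=
  (Finset.univ : Finset H.ConnectedComponent).val.map fun c => c.supp.ncard

/-- `G` admits a unique path sequence. -/
def UniquePathSequence [Fintype V] (G : SimpleGraph V) : Prop :=
  ∀ H₁ H₂ : SimpleGraph V, IsMinPathCover G H₁ → IsMinPathCover G H₂ →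
    pathSeq H₁ = pathSeq H₂

/-- Number of leaves (vertices of degree 1). -/
noncomputable def numLeaves (G : SimpleGraph V) : ℕ := {v | ndeg G v = 1}.ncard

/-- Number of heavy edges (edges both of whose endpoints have degree > 2). -/
noncomputable def numHeavyEdges (G : SimpleGraph V) : ℕ :=
  {e ∈ G.edgeSet | ∀ v ∈ e, 2 < ndeg G v}.ncard

/-- Number of edges. -/
noncomputable def numEdges (G : SimpleGraph V) : ℕ := G.edgeSet.ncard

/-- A graph is 2-sparse if no two adjacent vertices both have degree > 2. -/
def TwoSparse (G : SimpleGraph V) : Prop :=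
  ∀ u v, G.Adj u v → ndeg G u ≤ 2 ∨ ndeg G v ≤ 2

/-- `G` is a path graph. -/
def IsPathGraph (G : SimpleGraph V) : Prop := G.IsTree ∧ ∀ v, ndeg G v ≤ 2

/-- `G` is a cycle graph. -/
def IsCycleGraph (G : SimpleGraph V) : Prop := G.Connected ∧ ∀ v, ndeg G v = 2

/-- A generalized star: a tree with exactly one heavy vertex (the center) in which
all vines have the same number of vertices (equivalently, all leaves are at the same
distance from the center). -/
def IsGenStar (G : SimpleGraph V) : Prop :=
  G.IsTree ∧ ∃ c k, 2 < ndeg G c ∧ (∀ v, v ≠ c → ndeg G v ≤ 2) ∧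
    ∀ v, ndeg G v = 1 → G.dist c v = k

/-- An L(2,1)-labeling. -/
def IsL21Labeling (G : SimpleGraph V) (f : V → ℕ) : Prop :=
  (∀ u v, G.Adj u v → 2 ≤ Nat.dist (f u) (f v)) ∧
  (∀ u v, G.dist u v = 2 → 1 ≤ Nat.dist (f u) (f v))

/-- `λ(G)`: the least `k` such that `G` has an L(2,1)-labeling with labels in `{0,…,k}`. -/
noncomputable def lambdaNum (G : SimpleGraph V) : ℕ :=
  sInf {k | ∃ f : V → ℕ, IsL21Labeling G f ∧ ∀ v, f v ≤ k}

/-- A λ-labeling: an L(2,1)-labeling with maximum label `λ(G)`. -/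
def IsLambdaLabeling (G : SimpleGraph V) (f : V → ℕ) : Prop :=
  IsL21Labeling G f ∧ (∀ v, f v ≤ lambdaNum G) ∧ ∃ v, f v = lambdaNum G

/-- The set of holes of a labeling: unused labels `h` with `1 ≤ h ≤ λ(G) - 1`. -/
def labHoles (G : SimpleGraph V) (f : V → ℕ) : Set ℕ :=
  {h | 1 ≤ h ∧ h + 1 ≤ lambdaNum G ∧ ∀ v, f v ≠ h}

/-- The hole index `ρ(G)`: minimum number of holes over all λ-labelings. -/
noncomputable def holeIndex (G : SimpleGraph V) : ℕ :=
  sInf {k | ∃ f : V → ℕ, IsLambdaLabeling G f ∧ (labHoles G f).ncard = k}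

open scoped Classical in
/-- The island sequence of a labeling: the multiset of cardinalities of the maximal
intervals `[a,b]` of consecutive integers all used by the labeling. -/
noncomputable def islandSeq [Fintype V] (G : SimpleGraph V) (f : V → ℕ) : Multiset ℕ :=
  (((Finset.range (lambdaNum G + 1)) ×ˢ (Finset.range (lambdaNum G + 1))).filter
    (fun q => q.1 ≤ q.2 ∧ (∀ x ∈ Finset.Icc q.1 q.2, ∃ v, f v = x) ∧
      (q.1 = 0 ∨ ∀ v, f v ≠ q.1 - 1) ∧ ∀ v, f v ≠ q.2 + 1)).val.map
    fun q => q.2 - q.1 + 1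

/-- `G` admits (at least) two distinct island sequences. -/
def MultipleIslandSequences [Fintype V] (G : SimpleGraph V) : Prop :=
  ∃ f g : V → ℕ, IsLambdaLabeling G f ∧ IsLambdaLabeling G g ∧
    (labHoles G f).ncard = holeIndex G ∧ (labHoles G g).ncard = holeIndex G ∧
    islandSeq G f ≠ islandSeq G g

/-- A vine: a maximal path one of whose endpoints (`a`) is a leaf and all of whose
vertices are light.  Maximality: any light vertex adjacent to the other end already
lies on the path. -/
def IsVine (G : SimpleGraph V) {a b : V} (p : G.Walk a b) : Prop :=
  p.IsPath ∧ ndeg G a = 1 ∧ (∀ v ∈ p.support, ndeg G v ≤ 2) ∧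
  ∀ c, G.Adj b c → ndeg G c ≤ 2 → c ∈ p.support

/-- A vine with center `v`: the (heavy) vertex adjacent to the non-leaf end of the vine. -/
def IsVineWithCenter (G : SimpleGraph V) {a b : V} (p : G.Walk a b) (v : V) : Prop :=
  IsVine G p ∧ G.Adj b v ∧ 2 < ndeg G v

/-- The matching number of the subgraph of `G` induced by `S`. -/
noncomputable def matchingNumberOn (G : SimpleGraph V) (S : Set V) : ℕ :=
  sSup {k | ∃ M : Set (Sym2 V), M ⊆ G.edgeSet ∧ (∀ e ∈ M, ∀ v ∈ e, v ∈ S) ∧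
    (∀ e ∈ M, ∀ f ∈ M, e ≠ f → ∀ v, v ∈ e → v ∉ f) ∧ M.ncard = k}

/-- Labels used in the family `F`: `A`, or `B k` where `k` records the number of
vertices of each vine of the labeled generalized star that produced the label. -/
inductive Lab | A | B (k : ℕ)

/-- A labeled generalized star with center `c` whose vines have `k` vertices each
(equivalently, every leaf is at distance `k` from `c`); the degenerate case
`deg c = 2` is the convention regarding a path of length `2k` as a labeled
generalized star with two vines.  The neighbors of the center are labeled `B k`,
the other non-leaf vertices (and the center) are labeled `A`, leaves are unlabeled. -/
def IsLGenStar {W : Type*} (H : SimpleGraph W) (c : W) (k : ℕ)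
    (lab : W → Option Lab) : Prop :=
  H.IsTree ∧ 2 ≤ ndeg H c ∧ (∀ v, v ≠ c → ndeg H v ≤ 2) ∧
  (∀ v, ndeg H v = 1 → H.dist c v = k) ∧
  lab c = some Lab.A ∧
  (∀ v, H.Adj c v → lab v = some (Lab.B k)) ∧
  (∀ v, v ≠ c → ¬H.Adj c v → ndeg H v = 1 → lab v = none) ∧
  (∀ v, v ≠ c → ¬H.Adj c v → 2 ≤ ndeg H v → lab v = some Lab.A)

/-- A labeled path: a path with at least three vertices, non-leaf vertices labeled `A`. -/
def IsLPath {W : Type*} (H : SimpleGraph W) (lab : W → Option Lab) : Prop :=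
  H.IsTree ∧ (∀ v, ndeg H v ≤ 2) ∧ 3 ≤ Nat.card W ∧
  (∀ v, ndeg H v = 1 → lab v = none) ∧
  ∀ v, 2 ≤ ndeg H v → lab v = some Lab.A

/-- The induced subgraph of `T` on `s` is a labeled generalized star. -/
def LGenStarOn (T : SimpleGraph V) (s : Set V) (c : V) (k : ℕ)
    (lab : V → Option Lab) : Prop :=
  ∃ hc : c ∈ s, IsLGenStar (T.induce s) ⟨c, hc⟩ k fun v => lab v.1

/-- The induced subgraph of `T` on `s` is a labeled path. -/
def LPathOn (T : SimpleGraph V) (s : Set V) (lab : V → Option Lab) : Prop :=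
  IsLPath (T.induce s) fun v => lab v.1

/-- The family `F` of labeled trees, realized as induced subgraphs (on vertex sets `s`)
of an ambient graph `T`:  start from a labeled generalized star with at least three
vines or from a labeled path, and repeatedly attach, via a single new edge, a labeled
generalized star with at least three vines at a vertex labeled `A` (Type-1), a labeled
path by one of its non-leaf vertices at a vertex labeled `A` (Type-2), or a labeled
generalized star whose vines have the same number of vertices `k` as those of the star
that labeled `u` with `B k`, at a vertex `u` labeled `B k` (Type-3). -/
inductive InF (T : SimpleGraph V) : Set V → (V → Option Lab) → Prop
  | base_star (s : Set V) (c : V) (k : ℕ) (lab : V → Option Lab) :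
      LGenStarOn T s c k lab → 3 ≤ {w ∈ s | T.Adj c w}.ncard → InF T s lab
  | base_path (s : Set V) (lab : V → Option Lab) :
      LPathOn T s lab → InF T s lab
  | type1 (s : Set V) (lab : V → Option Lab) (t : Set V) (lab' : V → Option Lab)
      (u c : V) (k : ℕ) :
      InF T s lab → Disjoint s t → u ∈ s → c ∈ t → lab u = some Lab.A →
      LGenStarOn T t c k lab' → 3 ≤ {w ∈ t | T.Adj c w}.ncard →
      (∀ x ∈ s, ∀ y ∈ t, (T.Adj x y ↔ x = u ∧ y = c)) →
      (∀ x ∈ s, lab' x = lab x) →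
      InF T (s ∪ t) lab'
  | type2 (s : Set V) (lab : V → Option Lab) (t : Set V) (lab' : V → Option Lab)
      (u v : V) :
      InF T s lab → Disjoint s t → u ∈ s → v ∈ t → lab u = some Lab.A →
      LPathOn T t lab' → 2 ≤ {w ∈ t | T.Adj v w}.ncard →
      (∀ x ∈ s, ∀ y ∈ t, (T.Adj x y ↔ x = u ∧ y = v)) →
      (∀ x ∈ s, lab' x = lab x) →
      InF T (s ∪ t) lab'
  | type3 (s : Set V) (lab : V → Option Lab) (t : Set V) (lab' : V → Option Lab)
      (u c : V) (k : ℕ) :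
      InF T s lab → Disjoint s t → u ∈ s → c ∈ t → lab u = some (Lab.B k) →
      LGenStarOn T t c k lab' →
      (∀ x ∈ s, ∀ y ∈ t, (T.Adj x y ↔ x = u ∧ y = c)) →
      (∀ x ∈ s, lab' x = lab x) →
      InF T (s ∪ t) lab'

/-- `G` is obtained from the tree `T` by expanding each edge of `T` into a complete
graph of arbitrary order: there is an embedding `ι` of the vertices of `T` and an
assignment `b` of a block of vertices of `G` to each edge of `T` such that an original
vertex lies in the block of an edge iff it is an endpoint of that edge, blocks of
distinct edges meet only in original vertices, every vertex of `G` lies in some block,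
and two distinct vertices of `G` are adjacent iff they lie in a common block. -/
def IsBlockExpansion {U W : Type*} (T : SimpleGraph U) (G : SimpleGraph W) : Prop :=
  ∃ (ι : U ↪ W) (b : Sym2 U → Set W),
    (∀ (u : U), ∀ e ∈ T.edgeSet, (ι u ∈ b e ↔ u ∈ e)) ∧
    (∀ e ∈ T.edgeSet, ∀ f ∈ T.edgeSet, e ≠ f → b e ∩ b f ⊆ Set.range ι) ∧
    (∀ w : W, ∃ e ∈ T.edgeSet, w ∈ b e) ∧
    (∀ x y : W, G.Adj x y ↔ x ≠ y ∧ ∃ e ∈ T.edgeSet, x ∈ b e ∧ y ∈ b e)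

section BlockExpansion

open scoped Classical

/-- The vertices of degree greater than 2. -/
noncomputable def heavyVerts [Fintype V] (T : SimpleGraph V) : Finset V :=
  Finset.univ.filter fun v => 2 < T.degree v

/-- The data of an expansion of each edge of `T` into a block of `G`. -/
structure BlockData {U W : Type*} (T : SimpleGraph U) (G : SimpleGraph W) where
  /-- the embedding of the original vertices -/
  ι : U ↪ W
  /-- the block of an edge -/
  b : Sym2 U → Set W
  mem_iff : ∀ (u : U), ∀ e ∈ T.edgeSet, (ι u ∈ b e ↔ u ∈ e)
  inter_subset : ∀ e ∈ T.edgeSet, ∀ f ∈ T.edgeSet, e ≠ f → b e ∩ b f ⊆ Set.range ι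
  exists_mem : ∀ w : W, ∃ e ∈ T.edgeSet, w ∈ b e
  adj_iff : ∀ x y : W, G.Adj x y ↔ x ≠ y ∧ ∃ e ∈ T.edgeSet, x ∈ b e ∧ y ∈ b e

lemma ndeg_eq_degree [Fintype V] (G : SimpleGraph V) (v : V) : ndeg G v = G.degree v := by
  rw [ndeg, Set.ncard_eq_toFinset_card', ← SimpleGraph.card_neighborFinset_eq_degree]
  rfl

lemma numLeaves_eq_card [Fintype V] (G : SimpleGraph V) :
    numLeaves G = (Finset.univ.filter fun v => G.degree v = 1).card := by
  rw [numLeaves, Set.ncard_eq_toFinset_card']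
  congr 1
  ext v
  simp [ndeg_eq_degree]

section Tree

variable {U : Type*} [Fintype U] {T : SimpleGraph U}

lemma one_le_degree_of_three_le_numLeaves (hT : T.IsTree) (hl : 3 ≤ numLeaves T) (v : U) :
    1 ≤ T.degree v := by
  have : Nontrivial U := by
    rw [numLeaves_eq_card] at hl
    have := Finset.card_le_univ (Finset.univ.filter fun v => T.degree v = 1)
    exact Fintype.one_lt_card_iff_nontrivial.mp (by omega)
  exact hT.connected.preconnected.degree_pos_of_nontrivial v

/-- In a tree, the degrees of the heavy vertices exceed 2 by `ℓ - 2` in total. -/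
lemma sum_degree_heavyVerts (hT : T.IsTree) (hl : 3 ≤ numLeaves T) :
    ∑ v ∈ heavyVerts T, T.degree v + 2 = 2 * (heavyVerts T).card + numLeaves T := by
  have h1 := T.sum_degrees_eq_twice_card_edges
  have h2 := hT.card_edgeFinset
  have h3 : ∀ v, T.degree v + (if T.degree v = 1 then 1 else 0) +
      (if 2 < T.degree v then 2 else 0) = 2 + (if 2 < T.degree v then T.degree v else 0) := by
    intro v
    have := one_le_degree_of_three_le_numLeaves hT hl v
    split_ifs <;> omega
  have h4 := Finset.sum_congr (rfl : (Finset.univ : Finset U) = _) fun v _ => h3 v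
  simp only [Finset.sum_add_distrib, ← Finset.sum_filter, Finset.sum_const, smul_eq_mul,
    Finset.card_univ] at h4
  rw [numLeaves_eq_card]
  unfold heavyVerts
  omega

omit [Fintype U] in
lemma exists_parent (hT : T.IsTree) (r : U) :
    ∃ par : U → U, ∀ x, x ≠ r → T.Adj (par x) x ∧ T.dist r (par x) + 1 = T.dist r x := by
  have h : ∀ x, ∃ y, x ≠ r → T.Adj y x ∧ T.dist r y + 1 = T.dist r x := by
    intro x
    by_cases hx : x = r
    · exact ⟨x, fun h => absurd hx h⟩
    obtain ⟨p, hp⟩ := hT.connected.exists_walk_length_eq_dist x r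
    cases p with
    | nil => exact absurd rfl hx
    | cons h q =>
      refine ⟨_, fun _ => ⟨h.symm, ?_⟩⟩
      have := SimpleGraph.dist_le q
      rw [SimpleGraph.Walk.length_cons] at hp
      have h3 := h.symm.diff_dist_adj (u := r)
      rw [T.dist_comm] at hp this
      omega
  choose par hpar using h
  exact ⟨par, hpar⟩

/-- Every edge of a tree joins some vertex to its parent. -/
lemma exists_eq_parent_edge (hT : T.IsTree) {r : U} {par : U → U}
    (hpar : ∀ x, x ≠ r → T.Adj (par x) x ∧ T.dist r (par x) + 1 = T.dist r x)
    {e : Sym2 U} (he : e ∈ T.edgeSet) : ∃ c, c ≠ r ∧ e = s(par c, c) := by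
  have h := Finset.surj_on_of_inj_on_of_card_le (s := Finset.univ.erase r) (t := T.edgeFinset)
    (fun c _ => s(par c, c))
    (fun c hc => by simpa using (hpar c (Finset.ne_of_mem_erase hc)).1)
    (fun c d hc hd hcd => by
      have h1 := (hpar c (Finset.ne_of_mem_erase hc)).2
      have h2 := (hpar d (Finset.ne_of_mem_erase hd)).2
      rcases Sym2.eq_iff.mp hcd with h | h
      · exact h.2
      · rw [h.1] at h1; rw [← h.2] at h2; omega)
    (by
      have := hT.card_edgeFinset
      rw [Finset.card_erase_of_mem (Finset.mem_univ _), Finset.card_univ]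
      omega)
  obtain ⟨c, hc, hce⟩ := h e (by simpa using he)
  exact ⟨c, Finset.ne_of_mem_erase hc, hce⟩

/-- A vertex without children is a leaf. -/
lemma degree_eq_one_of_no_child (hT : T.IsTree) (hl : 3 ≤ numLeaves T) {r : U} {par : U → U}
    (hpar : ∀ x, x ≠ r → T.Adj (par x) x ∧ T.dist r (par x) + 1 = T.dist r x)
    {x : U} (hx : ∀ y, y ≠ r → par y ≠ x) : x ≠ r ∧ T.degree x = 1 := by
  have hnb : ∀ y, T.Adj x y → x ≠ r ∧ y = par x := by
    intro y hxy
    obtain ⟨c, hc, hce⟩ := exists_eq_parent_edge hT hpar (e := s(x, y)) (by simpa using hxy)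
    rcases Sym2.eq_iff.mp hce with h | h
    · exact absurd h.1.symm (hx c hc)
    · exact ⟨h.1 ▸ hc, h.1 ▸ h.2⟩
  have h1 := one_le_degree_of_three_le_numLeaves hT hl x
  obtain ⟨y, hy⟩ := (T.degree_pos_iff_exists_adj x).mp h1
  refine ⟨(hnb y hy).1, le_antisymm ?_ h1⟩
  rw [← SimpleGraph.card_neighborFinset_eq_degree]
  refine (Finset.card_le_card (t := {par x}) fun z hz => ?_).trans_eq (Finset.card_singleton _)
  simpa using (hnb z (by simpa using hz)).2

/-- A decomposition of a tree rooted at a leaf into `ℓ - 1` descending paths: `head x` is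
the top vertex of the path containing `x`. -/
lemma exists_head (hT : T.IsTree) (hl : 3 ≤ numLeaves T) :
    ∃ (r : U) (par head : U → U),
      (∀ x, x ≠ r → T.Adj (par x) x ∧ T.dist r (par x) + 1 = T.dist r x) ∧
      (∀ x y, head x = head y → T.dist r x = T.dist r y → x = y) ∧
      (∀ x y, head x = head y → T.dist r x < T.dist r y → head (par y) = head y) ∧
      (Finset.univ.image head).card + 1 ≤ numLeaves T := by
  obtain ⟨r, hr⟩ : ∃ r, T.degree r = 1 := by
    rw [numLeaves_eq_card] at hl
    obtain ⟨r, hr⟩ := Finset.card_pos.mp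
      (show 0 < (Finset.univ.filter fun v => T.degree v = 1).card by omega)
    exact ⟨r, by simpa using hr⟩
  obtain ⟨par, hpar⟩ := exists_parent hT r
  obtain ⟨ch, hch⟩ : ∃ ch : U → U, ∀ x, (∃ y, y ≠ r ∧ par y = x) → ch x ≠ r ∧ par (ch x) = x := by
    refine ⟨fun x => if h : ∃ y, y ≠ r ∧ par y = x then h.choose else x, fun x hx => ?_⟩
    simp only [hx, dif_pos]
    exact hx.choose_spec
  let chosen : U → Prop := fun x => x ≠ r ∧ ch (par x) = x
  let head : U → U := (measure fun x => T.dist r x).wf.fix fun x rec =>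
    if h : chosen x then rec (par x) (Nat.lt_of_succ_le (hpar x h.1).2.le) else x
  have head_eq : ∀ x, head x = if chosen x then head (par x) else x := by
    intro x
    simp only [head]
    rw [WellFounded.fix_eq]
    split_ifs <;> rfl
  have head_pos : ∀ {x}, chosen x → head x = head (par x) := fun {x} h => by
    rw [head_eq, if_pos h]
  have head_neg : ∀ {x}, ¬ chosen x → head x = x := fun {x} h => by
    rw [head_eq, if_neg h]
  have head_le : ∀ n x, T.dist r x = n → T.dist r (head x) ≤ T.dist r x ∧ ¬ chosen (head x) := by
    intro n
    induction n using Nat.strong_induction_on with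
    | _ n ih =>
      intro x hx
      by_cases h : chosen x
      · have h1 := Nat.lt_of_succ_le (hpar x h.1).2.le
        have h2 := ih _ (hx ▸ h1) _ rfl
        rw [head_pos h]
        exact ⟨h2.1.trans h1.le, h2.2⟩
      · rw [head_neg h]
        exact ⟨le_rfl, h⟩
  have head_lt : ∀ {x}, chosen x → T.dist r (head x) < T.dist r x := fun {x} h => by
    rw [head_pos h]
    exact (head_le _ _ rfl).1.trans_lt (Nat.lt_of_succ_le (hpar x h.1).2.le)
  refine ⟨r, par, head, hpar, ?_, ?_, ?_⟩
  · suffices h : ∀ n x y, T.dist r x = n → head x = head y → T.dist r x = T.dist r y → x = y from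
      fun x y => h _ x y rfl
    intro n
    induction n using Nat.strong_induction_on with
    | _ n ih =>
      intro x y hx hxy hd
      by_cases h : chosen x <;> by_cases h' : chosen y
      · have hp : par x = par y := by
          rw [head_pos h, head_pos h'] at hxy
          have h1 := (hpar x h.1).2
          have h2 := (hpar y h'.1).2
          exact ih _ (by omega) _ _ rfl hxy (by omega)
        rw [← h.2, ← h'.2, hp]
      · have := head_lt h
        rw [hxy, head_neg h'] at this
        omega
      · have := head_lt h'
        rw [← hxy, head_neg h] at this
        omega
      · rw [← head_neg h, ← head_neg h', hxy]
  · intro x y hxy hlt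
    by_cases h : chosen y
    · exact (head_pos h).symm
    · have := (head_le _ x rfl).1
      rw [hxy, head_neg h] at this
      omega
  · have h1 : Finset.univ.image head ⊆ Finset.univ.filter fun x => ¬ chosen x := by
      intro y hy
      obtain ⟨x, -, rfl⟩ := Finset.mem_image.mp hy
      simpa using (head_le _ x rfl).2
    have h2 := Finset.card_le_card h1
    have h3 : (Finset.univ.filter fun x => ∃ y, y ≠ r ∧ par y = x).card ≤
        (Finset.univ.filter fun x => chosen x).card := by
      refine Finset.card_le_card_of_injOn ch (fun x hx => ?_) (fun x hx y hy hxy => ?_)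
      · have := hch x (by simpa using hx)
        simp only [Finset.coe_filter, Finset.mem_univ, true_and, Set.mem_ofPred_eq]
        exact ⟨this.1, by rw [this.2]⟩
      · rw [← (hch x (by simpa using hx)).2, ← (hch y (by simpa using hy)).2, hxy]
    have h4 := Finset.card_filter_add_card_filter_not (s := Finset.univ) (fun x => chosen x)
    have h5 := Finset.card_filter_add_card_filter_not (s := Finset.univ)
      (fun x => ∃ y, y ≠ r ∧ par y = x)
    have h6 : (Finset.univ.filter fun x => ¬ ∃ y, y ≠ r ∧ par y = x).card + 1 ≤
        numLeaves T := by
      rw [numLeaves_eq_card, ← Finset.card_erase_add_one (a := r)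
        (s := Finset.univ.filter fun v => T.degree v = 1) (by simpa using hr)]
      refine Nat.succ_le_succ (Finset.card_le_card fun x hx => ?_)
      have := degree_eq_one_of_no_child hT hl hpar (x := x) (by simpa using hx)
      simpa using this
    omega

end Tree

lemma isL21Labeling_compl_of_injective {W : Type*} {G : SimpleGraph W} {f : W → ℕ}
    (hf : f.Injective) (h : ∀ u v, f u < f v → f v < f u + 2 → G.Adj u v) :
    IsL21Labeling Gᶜ f := by
  refine ⟨fun u v huv => ?_, fun u v huv => ?_⟩
  · rw [SimpleGraph.compl_adj] at huv
    have h1 := h u v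
    have h2 := h v u
    have h3 := hf.ne huv.1
    rw [G.adj_comm] at h2
    unfold Nat.dist
    by_contra hc
    rcases Nat.lt_or_gt_of_ne h3 with h4 | h4
    · exact huv.2 (h1 h4 (by omega))
    · exact huv.2 (h2 h4 (by omega))
  · have : u ≠ v := by
      rintro rfl
      simp at huv
    have := hf.ne this
    unfold Nat.dist
    omega

/-- An ordering of the vertices, cut into at most `N` intervals inside of which consecutive
vertices are adjacent, gives an injective labeling of the complement. -/
lemma exists_injective_labeling_of_key {W α : Type*} [Fintype W] [LinearOrder α]
    {G : SimpleGraph W} {key : W → α} (hkey : key.Injective) {idx : W → ℕ} {N : ℕ}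
    (hN : ∀ w, idx w < N) (hmono : ∀ u v, key u < key v → idx u ≤ idx v)
    (hadj : ∀ u v, key u < key v → idx u = idx v → (∀ w, key u < key w → ¬ key w < key v) →
      G.Adj u v) :
    ∃ f : W → ℕ, f.Injective ∧ IsL21Labeling Gᶜ f ∧ ∀ v, f v + 2 ≤ Fintype.card W + N := by
  let rank : W → ℕ := fun w => (Finset.univ.filter fun x => key x < key w).card
  have rank_lt : ∀ u v, key u < key v → rank u < rank v := by
    intro u v huv
    refine Finset.card_lt_card ⟨fun x hx => ?_, fun h => ?_⟩
    · simp only [Finset.mem_filter, Finset.mem_univ, true_and] at hx ⊢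
      exact hx.trans huv
    · have := h (show u ∈ _ by simpa using huv)
      simp at this
  have f_lt : ∀ u v, key u < key v → rank u + idx u < rank v + idx v := fun u v h =>
    add_lt_add_of_lt_of_le (rank_lt u v h) (hmono u v h)
  have lt_of : ∀ u v, rank u + idx u < rank v + idx v → key u < key v := by
    intro u v h
    rcases lt_trichotomy (key u) (key v) with h' | h' | h'
    · exact h'
    · rw [hkey h'] at h
      exact absurd h (lt_irrefl _)
    · exact absurd h (f_lt v u h').asymm
  have hinj : Function.Injective fun w => rank w + idx w := by
    intro u v h
    simp only at h
    rcases lt_trichotomy (key u) (key v) with h' | h' | h'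
    · exact absurd h (f_lt u v h').ne
    · exact hkey h'
    · exact absurd h (f_lt v u h').ne'
  refine ⟨fun w => rank w + idx w, hinj, isL21Labeling_compl_of_injective hinj ?_, ?_⟩
  · intro u v h1 h2
    have huv := lt_of u v h1
    have h3 := rank_lt u v huv
    have h4 := hmono u v huv
    refine hadj u v huv (by omega) fun w hw hw' => ?_
    have := rank_lt u w hw
    have := rank_lt w v hw'
    omega
  · intro v
    have h1 : rank v < Fintype.card W := by
      rw [← Finset.card_univ]
      refine Finset.card_lt_card ⟨Finset.subset_univ _, fun h => ?_⟩
      have := h (Finset.mem_univ v)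
      simp at this
    have := hN v
    simp only
    omega

section Expansion

variable {U W : Type*} [Fintype U] [Fintype W] {T : SimpleGraph U} {G : SimpleGraph W}

namespace BlockData

omit [Fintype U] [Fintype W] in
lemma adj_of_mem (B : BlockData T G) {e : Sym2 U} (he : e ∈ T.edgeSet) {x y : W} (hxy : x ≠ y)
    (hx : x ∈ B.b e) (hy : y ∈ B.b e) : G.Adj x y :=
  (B.adj_iff x y).mpr ⟨hxy, e, he, hx, hy⟩

omit [Fintype W] in
/-- Each vertex of the expansion is assigned to an original vertex `c` such that it lies in the
block of the edge from `c` to its parent. -/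
lemma exists_owner (B : BlockData T G) (hT : T.IsTree) {r : U} {par : U → U}
    (hpar : ∀ x, x ≠ r → T.Adj (par x) x ∧ T.dist r (par x) + 1 = T.dist r x) :
    ∃ own : W → U, (∀ x, own (B.ι x) = x) ∧ (∀ w, own w = r → w = B.ι r) ∧
      ∀ w, own w ≠ r → w ∈ B.b s(par (own w), own w) := by
  have h : ∀ w, ∃ c, (∀ x, w = B.ι x → c = x) ∧ (c = r → w = B.ι r) ∧
      (c ≠ r → w ∈ B.b s(par c, c)) := by
    intro w
    by_cases hw : ∃ x, w = B.ι x
    · obtain ⟨x, rfl⟩ := hw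
      refine ⟨x, fun y hy => B.ι.injective hy, fun h => h ▸ rfl, fun h => ?_⟩
      rw [B.mem_iff x _ (hpar x h).1]
      exact Sym2.mem_mk_right _ _
    · obtain ⟨e, he, hwe⟩ := B.exists_mem w
      obtain ⟨c, hc, rfl⟩ := exists_eq_parent_edge hT hpar he
      exact ⟨c, fun x hx => absurd ⟨x, hx⟩ hw, fun h => absurd h hc, fun _ => hwe⟩
  choose own h1 h2 h3 using h
  exact ⟨own, fun x => h1 _ _ rfl, h2, h3⟩

lemma exists_injective_labeling (B : BlockData T G) (hT : T.IsTree) (hl : 3 ≤ numLeaves T) :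
    ∃ f : W → ℕ, f.Injective ∧ IsL21Labeling Gᶜ f ∧
      ∀ v, f v + 3 ≤ Fintype.card W + numLeaves T := by
  obtain ⟨r, par, head, hpar, hinj, hhead, hcard⟩ := exists_head hT hl
  obtain ⟨own, hι, hroot, hown⟩ := B.exists_owner hT hpar
  let S := Finset.univ.image head
  let i : U → ℕ := fun x =>
    (S.equivFin ⟨head x, Finset.mem_image_of_mem _ (Finset.mem_univ x)⟩).val
  have hi : ∀ x y, i x = i y → head x = head y := by
    intro x y h
    simpa [i, Fin.val_inj] using h
  have hi' : ∀ x y, head x = head y → i x = i y := by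
    intro x y h
    simp [i, h]
  let pos : W → ℕ := fun w =>
    if w = B.ι (own w) then Fintype.card W else (Fintype.equivFin W w).val
  have pos_lt : ∀ w, w ≠ B.ι (own w) → pos w < Fintype.card W := fun w hw => by
    simp only [pos, if_neg hw]
    exact Fin.isLt _
  have pos_eq : ∀ w, w = B.ι (own w) → pos w = Fintype.card W := fun w hw => if_pos hw
  let key : W → ℕ ×ₗ (ℕ ×ₗ ℕ) := fun w => toLex (i (own w), toLex (T.dist r (own w), pos w))
  have key_lt : ∀ u v, key u < key v ↔ i (own u) < i (own v) ∨ i (own u) = i (own v) ∧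
      (T.dist r (own u) < T.dist r (own v) ∨ T.dist r (own u) = T.dist r (own v) ∧
        pos u < pos v) := by
    intro u v
    simp only [key, Prod.Lex.toLex_lt_toLex]
  have hkey : key.Injective := by
    intro u v h
    simp only [key, EmbeddingLike.apply_eq_iff_eq, Prod.mk.injEq] at h
    obtain ⟨h1, h2, h3⟩ := h
    have h4 := hinj _ _ (hi _ _ h1) h2
    by_cases hu : u = B.ι (own u) <;> by_cases hv : v = B.ι (own v)
    · rw [hu, hv, h4]
    · have := pos_lt v hv
      rw [← h3, pos_eq u hu] at this
      exact absurd this (lt_irrefl _)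
    · have := pos_lt u hu
      rw [h3, pos_eq v hv] at this
      exact absurd this (lt_irrefl _)
    · simpa [pos, if_neg hu, if_neg hv, Fin.val_inj] using h3
  obtain ⟨f, hf, hL, hb⟩ := exists_injective_labeling_of_key (G := G) hkey
    (idx := fun w => i (own w)) (N := S.card) (fun w => Fin.isLt _)
    (fun u v h => by
      rcases (key_lt u v).mp h with h | h
      · exact h.le
      · exact h.1.le)
    (fun u v h hidx hbt => by
      have hne : u ≠ v := by
        rintro rfl
        exact lt_irrefl _ h
      have hh := hi _ _ hidx
      rcases (key_lt u v).mp h with h | ⟨-, h | ⟨h, h'⟩⟩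
      · exact absurd hidx h.ne
      · have hv : own v ≠ r := by
          intro hv
          rw [hv, SimpleGraph.dist_self] at h
          omega
        obtain ⟨hp, hd⟩ := hpar _ hv
        have hpv := hhead _ _ hh h
        have hpi := hi' _ _ hpv
        suffices hu : u = B.ι (par (own v)) by
          refine B.adj_of_mem (e := s(par (own v), own v)) hp hne ?_ (hown v hv)
          rw [hu, B.mem_iff _ _ hp]
          exact Sym2.mem_mk_left _ _
        by_contra hu
        refine hbt (B.ι (par (own v))) ((key_lt _ _).mpr (Or.inr ?_))
          ((key_lt _ _).mpr (Or.inr ?_))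
        · rw [hι]
          refine ⟨hidx.trans hpi.symm, ?_⟩
          rcases Nat.lt_or_ge (T.dist r (own u)) (T.dist r (par (own v))) with hlt | hge
          · exact Or.inl hlt
          · have hdist : T.dist r (own u) = T.dist r (par (own v)) := by omega
            have hou := hinj _ _ (hh.trans hpv.symm) hdist
            refine Or.inr ⟨hdist, ?_⟩
            rw [pos_eq (B.ι (par (own v))) (by rw [hι])]
            exact pos_lt u (by rwa [hou])
        · rw [hι]
          exact ⟨hpi, Or.inl (by omega)⟩
      · have ho := hinj _ _ hh h
        have hv : own v ≠ r := by
          intro hv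
          exact hne ((hroot u (ho.trans hv)).trans (hroot v hv).symm)
        refine B.adj_of_mem (hpar _ hv).1 hne ?_ (hown v hv)
        rw [← ho]
        exact hown u (ho ▸ hv))
  refine ⟨f, hf, hL, fun v => ?_⟩
  have h1 := hb v
  have h2 : S.card + 1 ≤ numLeaves T := hcard
  omega

omit [Fintype U] in
lemma two_le_card_block (B : BlockData T G) {e : Sym2 U} (he : e ∈ T.edgeSet) :
    2 ≤ (B.b e).toFinset.card := by
  induction e with | _ x y =>
  rw [← Finset.card_pair (B.ι.injective.ne (T.ne_of_adj he))]
  refine Finset.card_le_card fun w hw => ?_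
  rw [Set.mem_toFinset]
  rcases Finset.mem_insert.mp hw with rfl | hw
  · exact (B.mem_iff _ _ he).mpr (Sym2.mem_mk_left _ _)
  · rw [Finset.mem_singleton.mp hw]
    exact (B.mem_iff _ _ he).mpr (Sym2.mem_mk_right _ _)

lemma sum_card_block_le (B : BlockData T G) (hT : T.IsTree) :
    ∑ e ∈ T.edgeFinset, (B.b e).toFinset.card + 1 ≤ Fintype.card W + T.edgeFinset.card := by
  let R : Finset W := Finset.univ.map B.ι
  have hR : R.card = T.edgeFinset.card + 1 := by
    rw [Finset.card_map, Finset.card_univ, hT.card_edgeFinset]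
  have h1 : ∀ e ∈ T.edgeFinset, (B.b e).toFinset.card ≤ ((B.b e).toFinset \ R).card + 2 := by
    intro e he
    rw [SimpleGraph.mem_edgeFinset] at he
    rw [← Finset.card_sdiff_add_card_inter _ R]
    refine Nat.add_le_add_left ?_ _
    induction e with | _ x y =>
    refine (Finset.card_le_card (t := {B.ι x, B.ι y}) fun w hw => ?_).trans Finset.card_le_two
    simp only [Finset.mem_inter, Set.mem_toFinset, R, Finset.mem_map, Finset.mem_univ,
      true_and] at hw
    obtain ⟨hw, z, rfl⟩ := hw
    rcases Sym2.mem_iff.mp ((B.mem_iff _ _ he).mp hw) with rfl | rfl <;> simp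
  have h2 : ∑ e ∈ T.edgeFinset, ((B.b e).toFinset \ R).card ≤ Rᶜ.card := by
    rw [← Finset.card_biUnion]
    · refine Finset.card_le_card fun w hw => ?_
      obtain ⟨e, -, hw⟩ := Finset.mem_biUnion.mp hw
      exact Finset.mem_compl.mpr (Finset.mem_sdiff.mp hw).2
    · intro e he e' he' hne
      refine Finset.disjoint_left.mpr fun w hw hw' => ?_
      rw [Finset.mem_sdiff, Set.mem_toFinset] at hw hw'
      obtain ⟨x, rfl⟩ := B.inter_subset e (by simpa using he) e' (by simpa using he') hne
        ⟨hw.1, hw'.1⟩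
      exact hw.2 (Finset.mem_map_of_mem _ (Finset.mem_univ x))
  have h3 := Finset.sum_le_sum h1
  rw [Finset.sum_add_distrib, Finset.sum_const, smul_eq_mul] at h3
  rw [Finset.card_compl] at h2
  have h4 := Finset.card_le_univ R
  omega

/-- A linear forest in a block expansion which avoids a set `D` of heavy vertices has at most
`n - ℓ + 1 - 2|D|` edges. -/
lemma card_add_numLeaves_le (B : BlockData T G) (hT : T.IsTree) (hsp : TwoSparse T)
    (hl : 3 ≤ numLeaves T) {D : Finset U} (hD : D ⊆ heavyVerts T) {A : Finset W} {s : W → W}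
    {f : W → ℕ} (hs : Set.InjOn s A) (hf : ∀ v ∈ A, f (s v) = f v + 1)
    (hAD : ∀ x ∈ D, B.ι x ∉ A ∧ ∀ v ∈ A, s v ≠ B.ι x) (hadj : ∀ v ∈ A, G.Adj v (s v)) :
    A.card + numLeaves T + 2 * D.card ≤ Fintype.card W + 1 := by
  have hblk : ∀ v, ∃ e, v ∈ A → e ∈ T.edgeFinset ∧ v ∈ B.b e ∧ s v ∈ B.b e := by
    intro v
    by_cases hv : v ∈ A
    · obtain ⟨-, e, he, h⟩ := (B.adj_iff _ _).mp (hadj v hv)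
      exact ⟨e, fun _ => ⟨by simpa using he, h⟩⟩
    · exact ⟨(B.exists_mem v).choose, fun h => absurd h hv⟩
  choose blk hblk using hblk
  let X : Sym2 U → Finset W := fun e => A.filter fun v => blk v = e
  let H := heavyVerts T
  let unused : U → Sym2 U → Prop := fun p e => p ∈ e ∧ B.ι p ∉ X e ∧ B.ι p ∉ (X e).image s
  have hA : A.card = ∑ e ∈ T.edgeFinset, (X e).card :=
    Finset.card_eq_sum_card_fiberwise fun v hv => (hblk v hv).1
  have hloc : ∀ e ∈ T.edgeFinset, (X e).card + 1 + (H.filter fun p => unused p e).card ≤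
      (B.b e).toFinset.card := by
    intro e he
    have he' : e ∈ T.edgeSet := by simpa using he
    rcases (X e).eq_empty_or_nonempty with hX | hX
    · have h1 : (H.filter fun p => unused p e).card ≤ 1 := by
        refine Finset.card_le_one.mpr fun p hp q hq => ?_
        by_contra hpq
        obtain ⟨hp, hpe, -⟩ := Finset.mem_filter.mp hp
        obtain ⟨hq, hqe, -⟩ := Finset.mem_filter.mp hq
        rw [(Sym2.mem_and_mem_iff hpq).mp ⟨hpe, hqe⟩] at he'
        have := hsp p q he'
        rw [ndeg_eq_degree, ndeg_eq_degree] at this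
        simp only [H, heavyVerts, Finset.mem_filter, Finset.mem_univ, true_and] at hp hq
        omega
      have h2 := B.two_le_card_block he'
      have h3 := Finset.card_eq_zero.mpr hX
      omega
    · obtain ⟨m, hm, hmax⟩ := Finset.exists_max_image (X e) f hX
      have hm' := Finset.mem_filter.mp hm
      have hsm : s m ∉ X e := fun h => by
        have := hmax _ h
        rw [hf m hm'.1] at this
        omega
      have hsm' : s m ∈ (X e).image s := Finset.mem_image_of_mem s hm
      rw [← Finset.card_insert_of_notMem hsm, ← Finset.card_map B.ι,
        ← Finset.card_union_of_disjoint]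
      · refine Finset.card_le_card fun w hw => ?_
        rw [Set.mem_toFinset]
        rcases Finset.mem_union.mp hw with hw | hw
        · rcases Finset.mem_insert.mp hw with rfl | hw
          · exact hm'.2 ▸ (hblk m hm'.1).2.2
          · have hw' := Finset.mem_filter.mp hw
            exact hw'.2 ▸ (hblk w hw'.1).2.1
        · obtain ⟨p, hp, rfl⟩ := Finset.mem_map.mp hw
          exact (B.mem_iff _ _ he').mpr (Finset.mem_filter.mp hp).2.1
      · refine Finset.disjoint_left.mpr fun w hw hw' => ?_
        obtain ⟨p, hp, rfl⟩ := Finset.mem_map.mp hw'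
        obtain ⟨-, -, h1, h2⟩ := Finset.mem_filter.mp hp
        rcases Finset.mem_insert.mp hw with hw | hw
        · exact h2 (hw ▸ hsm')
        · exact h1 hw
  have hdeg : ∀ p ∈ H, T.degree p + (if p ∈ D then 2 else 0) ≤
      (T.edgeFinset.filter fun e => unused p e).card + 2 := by
    intro p hp
    rw [← T.card_incidenceFinset_eq_degree, T.incidenceFinset_eq_filter,
      ← Finset.card_filter_add_card_filter_not (s := T.edgeFinset.filter fun e => p ∈ e)
        (fun e => unused p e)]
    have h1 : ((T.edgeFinset.filter fun e => p ∈ e).filter fun e => unused p e).card ≤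
        (T.edgeFinset.filter fun e => unused p e).card :=
      Finset.card_le_card (Finset.filter_subset_filter _ (Finset.filter_subset _ _))
    have hused : ∀ e, p ∈ e → ¬ unused p e → B.ι p ∈ X e ∨ B.ι p ∈ (X e).image s := by
      intro e hpe h
      by_contra hc
      push Not at hc
      exact h ⟨hpe, hc⟩
    have h2 : ((T.edgeFinset.filter fun e => p ∈ e).filter fun e => ¬ unused p e).card +
        (if p ∈ D then 2 else 0) ≤ 2 := by
      split_ifs with hpD
      · rw [Finset.card_eq_zero.mpr]
        refine Finset.filter_eq_empty_iff.mpr fun e he h => ?_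
        rcases hused e (Finset.mem_filter.mp he).2 h with h | h
        · exact (hAD p hpD).1 (Finset.mem_filter.mp h).1
        · obtain ⟨v, hv, hvp⟩ := Finset.mem_image.mp h
          exact (hAD p hpD).2 v (Finset.mem_filter.mp hv).1 hvp
      · obtain ⟨q, hq⟩ : ∃ q, ∀ v ∈ A, s v = B.ι p → v = q := by
          by_cases h : ∃ v ∈ A, s v = B.ι p
          · obtain ⟨q, hq, hqp⟩ := h
            exact ⟨q, fun v hv hvp => hs hv hq (hvp.trans hqp.symm)⟩
          · exact ⟨B.ι p, fun v hv hvp => absurd ⟨v, hv, hvp⟩ h⟩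
        refine (Finset.card_le_card (t := {blk (B.ι p), blk q}) fun e he => ?_).trans
          Finset.card_le_two
        obtain ⟨he, hu⟩ := Finset.mem_filter.mp he
        rw [Finset.mem_insert, Finset.mem_singleton]
        rcases hused e (Finset.mem_filter.mp he).2 hu with h | h
        · exact Or.inl (Finset.mem_filter.mp h).2.symm
        · obtain ⟨v, hv, hvp⟩ := Finset.mem_image.mp h
          obtain ⟨hv, hve⟩ := Finset.mem_filter.mp hv
          exact Or.inr (hq v hv hvp ▸ hve.symm)
    omega
  have h1 := Finset.sum_le_sum hloc
  have h2 := Finset.sum_le_sum hdeg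
  have h3 : ∑ e ∈ T.edgeFinset, (H.filter fun p => unused p e).card =
      ∑ p ∈ H, (T.edgeFinset.filter fun e => unused p e).card := by
    simp only [Finset.card_filter]
    exact Finset.sum_comm
  have h4 := B.sum_card_block_le hT
  have h5 := sum_degree_heavyVerts hT hl
  have h6 : ∑ p ∈ H, (if p ∈ D then 2 else 0) = 2 * D.card := by
    rw [← Finset.sum_filter, Finset.filter_mem_eq_inter, Finset.inter_eq_right.mpr hD,
      Finset.sum_const, smul_eq_mul, mul_comm]
  rw [Finset.sum_add_distrib, Finset.sum_add_distrib, ← hA, h3, Finset.sum_const, smul_eq_mul]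
    at h1
  rw [Finset.sum_add_distrib, Finset.sum_add_distrib, h6, Finset.sum_const, smul_eq_mul] at h2
  simp only [H] at h1 h2
  omega

omit [Fintype W] in
/-- In an expansion of a tree with at least three leaves, an adjacent pair which dominates the
graph contains a heavy original vertex. -/
lemma exists_heavy_of_dominating (B : BlockData T G) (hT : T.IsTree) (hl : 3 ≤ numLeaves T)
    {u v : W} (huv : G.Adj u v) (hdom : ∀ w, w = u ∨ w = v ∨ G.Adj w u ∨ G.Adj w v) :
    ∃ p ∈ heavyVerts T, u = B.ι p ∨ v = B.ι p := by
  obtain ⟨-, e, he, hue, hve⟩ := (B.adj_iff _ _).mp huv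
  have hcover : ∀ z : U, ∃ g ∈ T.edgeSet, z ∈ g ∧ (u ∈ B.b g ∨ v ∈ B.b g) := by
    intro z
    rcases hdom (B.ι z) with h | h | h | h
    · exact ⟨e, he, (B.mem_iff _ _ he).mp (h ▸ hue), Or.inl hue⟩
    · exact ⟨e, he, (B.mem_iff _ _ he).mp (h ▸ hve), Or.inr hve⟩
    · obtain ⟨-, g, hg, h1, h2⟩ := (B.adj_iff _ _).mp h
      exact ⟨g, hg, (B.mem_iff _ _ hg).mp h1, Or.inl h2⟩
    · obtain ⟨-, g, hg, h1, h2⟩ := (B.adj_iff _ _).mp h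
      exact ⟨g, hg, (B.mem_iff _ _ hg).mp h1, Or.inr h2⟩
  have hshare : ∀ w, ∀ g ∈ T.edgeSet, ∀ g' ∈ T.edgeSet, g ≠ g' → w ∈ B.b g → w ∈ B.b g' →
      ∃ a, w = B.ι a ∧ a ∈ g ∧ a ∈ g' := by
    intro w g hg g' hg' hne hw hw'
    obtain ⟨a, rfl⟩ := B.inter_subset g hg g' hg' hne ⟨hw, hw'⟩
    exact ⟨a, rfl, (B.mem_iff _ _ hg).mp hw, (B.mem_iff _ _ hg').mp hw'⟩
  have hall : ∀ g ∈ T.edgeSet, u ∈ B.b g ∨ v ∈ B.b g := by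
    choose g hg hzg hmeet using hcover
    have hform : ∀ z, z ∉ e → g z ≠ e ∧ ∃ a ∈ e, g z = s(a, z) := by
      intro z hz
      have hne : g z ≠ e := fun h => hz (h ▸ hzg z)
      refine ⟨hne, ?_⟩
      obtain ⟨a, hag, hae⟩ : ∃ a, a ∈ g z ∧ a ∈ e := by
        rcases hmeet z with h | h
        · obtain ⟨a, -, ha⟩ := hshare u _ (hg z) _ he hne h hue
          exact ⟨a, ha⟩
        · obtain ⟨a, -, ha⟩ := hshare v _ (hg z) _ he hne h hve
          exact ⟨a, ha⟩
      have haz : a ≠ z := fun h => hz (h ▸ hae)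
      exact ⟨a, hae, (Sym2.mem_and_mem_iff haz).mp ⟨hag, hzg z⟩⟩
    let F := T.edgeFinset.filter fun g => u ∈ B.b g ∨ v ∈ B.b g
    have heF : e ∈ F := Finset.mem_filter.mpr ⟨by simpa using he, Or.inl hue⟩
    have h1 : (Finset.univ.filter fun z => z ∉ e).card ≤ (F.erase e).card := by
      refine Finset.card_le_card_of_injOn g (fun z hz => ?_) (fun z hz z' hz' h => ?_)
      · have hz : z ∉ e := by simpa using hz
        exact Finset.mem_erase.mpr ⟨(hform z hz).1,
          Finset.mem_filter.mpr ⟨by simpa using hg z, hmeet z⟩⟩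
      · have hz : z ∉ e := by simpa using hz
        have hz' : z' ∉ e := by simpa using hz'
        obtain ⟨-, a, ha, hga⟩ := hform z hz
        obtain ⟨-, a', ha', hga'⟩ := hform z' hz'
        rw [hga, hga'] at h
        rcases Sym2.eq_iff.mp h with h | h
        · exact h.2
        · exact absurd (h.1 ▸ ha) hz'
    have h2 : (Finset.univ.filter fun z => z ∈ e).card ≤ 2 := by
      induction e with | _ x y =>
      refine (Finset.card_le_card (t := {x, y}) fun z hz => ?_).trans Finset.card_le_two
      simpa using hz
    have h3 := Finset.card_filter_add_card_filter_not (s := Finset.univ) (fun z => z ∈ e)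
    have h4 := Finset.card_erase_add_one heF
    have h5 := hT.card_edgeFinset
    rw [Finset.card_univ] at h3
    have hF : F = T.edgeFinset := Finset.eq_of_subset_of_card_le (Finset.filter_subset _ _)
      (by omega)
    intro g' hg'
    have : g' ∈ F := hF ▸ (by simpa using hg')
    exact (Finset.mem_filter.mp this).2
  obtain ⟨p, hp⟩ : (heavyVerts T).Nonempty := by
    by_contra h
    have := sum_degree_heavyVerts hT hl
    rw [Finset.not_nonempty_iff_eq_empty.mp h] at this
    simp only [Finset.sum_empty, Finset.card_empty] at this
    omega
  refine ⟨p, hp, ?_⟩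
  have htwo : ∀ w, 1 < ((T.incidenceFinset p).filter fun g => w ∈ B.b g).card → w = B.ι p := by
    intro w hw
    obtain ⟨g, hg, g', hg', hne⟩ := Finset.one_lt_card.mp hw
    obtain ⟨hgp, hwg⟩ := Finset.mem_filter.mp hg
    obtain ⟨hgp', hwg'⟩ := Finset.mem_filter.mp hg'
    rw [SimpleGraph.mem_incidenceFinset] at hgp hgp'
    obtain ⟨a, rfl, hag, hag'⟩ := hshare w g hgp.1 g' hgp'.1 hne hwg hwg'
    by_contra hap
    have hap : a ≠ p := fun h => hap (h ▸ rfl)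
    exact hne (((Sym2.mem_and_mem_iff hap).mp ⟨hag, hgp.2⟩).trans
      ((Sym2.mem_and_mem_iff hap).mp ⟨hag', hgp'.2⟩).symm)
  have hdeg : 2 < T.degree p := (Finset.mem_filter.mp hp).2
  rw [← T.card_incidenceFinset_eq_degree] at hdeg
  have hle : (T.incidenceFinset p).card ≤
      ((T.incidenceFinset p).filter fun g => u ∈ B.b g).card +
      ((T.incidenceFinset p).filter fun g => v ∈ B.b g).card := by
    refine (Finset.card_le_card fun g hg => ?_).trans (Finset.card_union_le _ _)
    rw [Finset.mem_union, Finset.mem_filter, Finset.mem_filter]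
    have := hall g (T.mem_incidenceFinset p g |>.mp hg).1
    tauto
  rcases Nat.lt_or_ge 1 ((T.incidenceFinset p).filter fun g => u ∈ B.b g).card with h | h
  · exact Or.inl (htwo u h)
  · exact Or.inr (htwo v (by omega))

omit [Fintype U] [Fintype W] in
lemma _root_.PaperPC.IsL21Labeling.dominating_of_eq {f : W → ℕ} (hf : IsL21Labeling Gᶜ f)
    {u v : W} (huv : u ≠ v) (h : f u = f v) :
    G.Adj u v ∧ ∀ w, w = u ∨ w = v ∨ G.Adj w u ∨ G.Adj w v := by
  have hadj : G.Adj u v := by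
    by_contra hc
    have := hf.1 u v ((SimpleGraph.compl_adj _ _ _).mpr ⟨huv, hc⟩)
    rw [h, Nat.dist_self] at this
    omega
  refine ⟨hadj, fun w => ?_⟩
  by_contra! hc
  obtain ⟨h1, h2, h3, h4⟩ := hc
  have hu : Gᶜ.Adj u w := (SimpleGraph.compl_adj _ _ _).mpr ⟨h1.symm, fun h => h3 h.symm⟩
  have hv : Gᶜ.Adj w v := (SimpleGraph.compl_adj _ _ _).mpr ⟨h2, h4⟩
  have hle := SimpleGraph.dist_le (hu.toWalk.append hv.toWalk)
  have hlen : (hu.toWalk.append hv.toWalk).length = 2 := by simp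
  have hpos := (hu.reachable.trans hv.reachable).pos_dist_of_ne huv
  have hone : Gᶜ.dist u v ≠ 1 := fun h => by
    rw [SimpleGraph.dist_eq_one_iff_adj, SimpleGraph.compl_adj] at h
    exact h.2 hadj
  have := hf.2 u v (by omega)
  rw [h, Nat.dist_self] at this
  omega

lemma le_of_isL21Labeling (B : BlockData T G) (hT : T.IsTree) (hsp : TwoSparse T)
    (hl : 3 ≤ numLeaves T) {f : W → ℕ} (hf : IsL21Labeling Gᶜ f) {k : ℕ} (hk : ∀ v, f v ≤ k) :
    Fintype.card W + numLeaves T ≤ k + 3 := by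
  let D := (heavyVerts T).filter fun p => ∃ v, v ≠ B.ι p ∧ f v = f (B.ι p)
  let R := (D.map B.ι)ᶜ
  have hR : R.card + D.card = Fintype.card W := by
    rw [← Finset.card_map B.ι (s := D), Finset.card_compl_add_card]
  have hinj : Set.InjOn f R := by
    intro u hu v hv huv
    by_contra hne
    obtain ⟨hadj, hdom⟩ := hf.dominating_of_eq hne huv
    obtain ⟨p, hp, h | h⟩ := B.exists_heavy_of_dominating hT hl hadj hdom
    · refine Finset.mem_compl.mp hu (h ▸ Finset.mem_map_of_mem _ ?_)
      exact Finset.mem_filter.mpr ⟨hp, v, h ▸ Ne.symm hne, h ▸ huv.symm⟩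
    · refine Finset.mem_compl.mp hv (h ▸ Finset.mem_map_of_mem _ ?_)
      exact Finset.mem_filter.mpr ⟨hp, u, h ▸ hne, h ▸ huv⟩
  let A := R.filter fun v => ∃ w ∈ R, f w = f v + 1
  have hs : ∀ v, ∃ w, v ∈ A → w ∈ R ∧ f w = f v + 1 := by
    intro v
    by_cases hv : v ∈ A
    · obtain ⟨w, hw⟩ := (Finset.mem_filter.mp hv).2
      exact ⟨w, fun _ => hw⟩
    · exact ⟨v, fun h => absurd h hv⟩
  choose s hs using hs
  have hA := B.card_add_numLeaves_le hT hsp hl (D := D) (Finset.filter_subset _ _) (A := A)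
    (s := s) (f := f)
    (fun u hu v hv huv => hinj (Finset.mem_filter.mp hu).1 (Finset.mem_filter.mp hv).1 (by
      have h1 := (hs u hu).2
      have h2 := (hs v hv).2
      rw [huv] at h1
      omega))
    (fun v hv => (hs v hv).2)
    (fun x hx => by
      have hxR : B.ι x ∉ R := fun h => Finset.mem_compl.mp h (Finset.mem_map_of_mem _ hx)
      exact ⟨fun h => hxR (Finset.mem_filter.mp h).1, fun v hv h => hxR (h ▸ (hs v hv).1)⟩)
    (fun v hv => by
      have h1 := (hs v hv).2
      by_contra hc
      have h2 := hf.1 v (s v) ((SimpleGraph.compl_adj _ _ _).mpr ⟨fun h => by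
        rw [← h] at h1
        omega, hc⟩)
      unfold Nat.dist at h2
      omega)
  have h1 : (R.image f).card = R.card := Finset.card_image_of_injOn hinj
  have h2 : ((R \ A).image fun v => f v + 1).card = (R \ A).card :=
    Finset.card_image_of_injOn fun u hu v hv huv => hinj (Finset.mem_sdiff.mp hu).1
      (Finset.mem_sdiff.mp hv).1 (by simpa using huv)
  have h3 : (R \ A).card + A.card = R.card :=
    Finset.card_sdiff_add_card_eq_card (Finset.filter_subset _ _)
  have h4 : Disjoint (R.image f) ((R \ A).image fun v => f v + 1) := by
    refine Finset.disjoint_left.mpr fun i hi hi' => ?_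
    obtain ⟨w, hw, rfl⟩ := Finset.mem_image.mp hi
    obtain ⟨v, hv, hvw⟩ := Finset.mem_image.mp hi'
    obtain ⟨hv, hvA⟩ := Finset.mem_sdiff.mp hv
    exact hvA (Finset.mem_filter.mpr ⟨hv, w, hw, hvw.symm⟩)
  have h5 : (R.image f ∪ (R \ A).image fun v => f v + 1).card ≤ k + 2 := by
    rw [← Finset.card_range (k + 2)]
    refine Finset.card_le_card fun i hi => ?_
    rw [Finset.mem_range]
    rcases Finset.mem_union.mp hi with hi | hi
    · obtain ⟨w, -, rfl⟩ := Finset.mem_image.mp hi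
      have := hk w
      omega
    · obtain ⟨w, -, rfl⟩ := Finset.mem_image.mp hi
      have := hk w
      omega
  rw [Finset.card_union_of_disjoint h4, h1, h2] at h5
  omega

lemma lambdaNum_compl (B : BlockData T G) (hT : T.IsTree) (hsp : TwoSparse T)
    (hl : 3 ≤ numLeaves T) : lambdaNum Gᶜ + 3 = Fintype.card W + numLeaves T := by
  obtain ⟨f, -, hf, hb⟩ := B.exists_injective_labeling hT hl
  have h1 : lambdaNum Gᶜ ≤ Fintype.card W + numLeaves T - 3 :=
    Nat.sInf_le ⟨f, hf, fun v => by have := hb v; omega⟩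
  have h2 : ∃ g : W → ℕ, IsL21Labeling Gᶜ g ∧ ∀ v, g v ≤ lambdaNum Gᶜ :=
    Nat.sInf_mem (s := {k | ∃ g : W → ℕ, IsL21Labeling Gᶜ g ∧ ∀ v, g v ≤ k})
      ⟨Fintype.card W + numLeaves T, f, hf, fun v => by have := hb v; omega⟩
  obtain ⟨g, hg, hgb⟩ := h2
  have := B.le_of_isL21Labeling hT hsp hl hg hgb
  omega

end BlockData

section Holes

variable {W : Type*} [Fintype W] {H : SimpleGraph W} {f : W → ℕ}

omit [Fintype W] in
lemma exists_eq_zero_of_isL21Labeling (hf : IsL21Labeling H f) (hb : ∀ v, f v ≤ lambdaNum H)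
    (hpos : 0 < lambdaNum H) : ∃ v, f v = 0 := by
  by_contra! h0
  have : lambdaNum H ≤ lambdaNum H - 1 := by
    refine Nat.sInf_le ⟨fun v => f v - 1, ⟨fun u v huv => ?_, fun u v huv => ?_⟩, fun v => ?_⟩
    · have h1 := hf.1 u v huv
      have h2 := h0 u
      have h3 := h0 v
      simp only [Nat.dist] at h1 ⊢
      omega
    · have h1 := hf.2 u v huv
      have h2 := h0 u
      have h3 := h0 v
      simp only [Nat.dist] at h1 ⊢
      omega
    · exact Nat.sub_le_sub_right (hb v) 1
  omega

omit [Fintype W] in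
lemma exists_eq_lambdaNum_of_isL21Labeling (hf : IsL21Labeling H f)
    (hb : ∀ v, f v ≤ lambdaNum H) (hpos : 0 < lambdaNum H) : ∃ v, f v = lambdaNum H := by
  by_contra! h0
  have : lambdaNum H ≤ lambdaNum H - 1 :=
    Nat.sInf_le ⟨f, hf, fun v => Nat.le_sub_one_of_lt (lt_of_le_of_ne (hb v) (h0 v))⟩
  omega

/-- The holes of a λ-labeling are exactly the unused labels. -/
lemma ncard_labHoles_add_card_image (hf : IsLambdaLabeling H f) (hpos : 0 < lambdaNum H) :
    (labHoles H f).ncard + (Finset.univ.image f).card = lambdaNum H + 1 := by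
  obtain ⟨hL, hb, m, hm⟩ := hf
  obtain ⟨z, hz⟩ := exists_eq_zero_of_isL21Labeling hL hb hpos
  have hset : labHoles H f = ↑(Finset.range (lambdaNum H + 1) \ Finset.univ.image f) := by
    ext i
    simp only [labHoles, Set.mem_ofPred_eq, Finset.coe_sdiff, Set.mem_sdiff, Finset.mem_coe,
      Finset.mem_range, Finset.mem_image, Finset.mem_univ, true_and, not_exists]
    refine ⟨fun h => ⟨by omega, h.2.2⟩, fun h => ⟨?_, ?_, h.2⟩⟩
    · exact Nat.one_le_iff_ne_zero.mpr fun hi => h.2 z (hz.trans hi.symm)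
    · have := h.2 m
      omega
  rw [hset, Set.ncard_coe_finset, Finset.card_sdiff_add_card_eq_card, Finset.card_range]
  intro i hi
  obtain ⟨v, -, rfl⟩ := Finset.mem_image.mp hi
  exact Finset.mem_range.mpr (Nat.lt_succ_of_le (hb v))

end Holes

lemma BlockData.holeIndex_compl (B : BlockData T G) (hT : T.IsTree) (hsp : TwoSparse T)
    (hl : 3 ≤ numLeaves T) : holeIndex Gᶜ + 2 = numLeaves T := by
  obtain ⟨f, hinj, hf, hb⟩ := B.exists_injective_labeling hT hl
  have hlam := B.lambdaNum_compl hT hsp hl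
  have hW : Fintype.card U ≤ Fintype.card W := Fintype.card_le_of_embedding B.ι
  have hU : numLeaves T ≤ Fintype.card U := numLeaves_eq_card T ▸ Finset.card_le_univ _
  have hpos : 0 < lambdaNum Gᶜ := by omega
  have hb' : ∀ v, f v ≤ lambdaNum Gᶜ := fun v => by have := hb v; omega
  have hfl : IsLambdaLabeling Gᶜ f :=
    ⟨hf, hb', exists_eq_lambdaNum_of_isL21Labeling hf hb' hpos⟩
  have h1 := ncard_labHoles_add_card_image hfl hpos
  rw [Finset.card_image_of_injective _ hinj, Finset.card_univ] at h1
  have h2 : holeIndex Gᶜ ≤ (labHoles Gᶜ f).ncard := Nat.sInf_le ⟨f, hfl, rfl⟩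
  obtain ⟨g, hg, hgk⟩ : ∃ g : W → ℕ, IsLambdaLabeling Gᶜ g ∧
      (labHoles Gᶜ g).ncard = holeIndex Gᶜ :=
    Nat.sInf_mem (s := {k | ∃ g : W → ℕ, IsLambdaLabeling Gᶜ g ∧ (labHoles Gᶜ g).ncard = k})
      ⟨_, f, hfl, rfl⟩
  have h3 := ncard_labHoles_add_card_image hg hpos
  have h4 : (Finset.univ.image g).card ≤ Fintype.card W := Finset.card_image_le
  omega

end Expansion

end BlockExpansion

/-- **Corollary (Statement 8).** Let `T` be a 2-sparse tree with `ℓ ≥ 3` leaves and let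
`G` (on `n` vertices) be obtained from `T` by expanding each edge of `T` into a
complete graph of arbitrary order.  Then `λ(Gᶜ) = n + ℓ − 3` and `ρ(Gᶜ) = ℓ − 2`. -/
theorem blockExpansion_complement_lambda_hole {U W : Type*} [Fintype U] [Fintype W]
    (T : SimpleGraph U) (G : SimpleGraph W)
    (hT : T.IsTree) (hsp : TwoSparse T) (hl : 3 ≤ numLeaves T)
    (hexp : IsBlockExpansion T G) :
    (lambdaNum Gᶜ : ℤ) = Fintype.card W + numLeaves T - 3 ∧
    (holeIndex Gᶜ : ℤ) = numLeaves T - 2 := by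
  obtain ⟨ι, b, h1, h2, h3, h4⟩ := hexp
  let B : BlockData T G := ⟨ι, b, h1, h2, h3, h4⟩
  have hlam := B.lambdaNum_compl hT hsp hl
  have hhole := B.holeIndex_compl hT hsp hl
  omega

end PaperPC
end

section
/- Let G be a graph on n vertices with λ(G) ≥ n − 1. Then ρ(G) = P(G^c) − 1, where G^c is the complement of G. -/
namespace PaperPC

open SimpleGraph

variable {V : Type*}

/-- `f` is an L(2,1)-labeling in which the distance-two condition is phrased through common
neighbors. -/
structure IsSpread (G : SimpleGraph V) (f : V → ℕ) : Prop where
  two_le : ∀ u v, G.Adj u v → f u + 2 ≤ f v ∨ f v + 2 ≤ f u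
  no_common : ∀ u v w, u ≠ v → f u = f v → G.Adj u w → ¬G.Adj v w

lemma isL21Labeling_iff_isSpread {G : SimpleGraph V} {f : V → ℕ} :
    IsL21Labeling G f ↔ IsSpread G f := by
  constructor
  · rintro ⟨h1, h2⟩
    have h1' : ∀ u v, G.Adj u v → f u + 2 ≤ f v ∨ f v + 2 ≤ f u := by
      intro u v huv
      have := h1 u v huv
      unfold Nat.dist at this
      omega
    refine ⟨h1', fun u v w huv hf hu hv => ?_⟩
    have hd : G.dist u v = 2 := by
      have hle : G.dist u v ≤ 2 := dist_le (Walk.cons hu (Walk.cons hv.symm Walk.nil))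
      have h0 : G.dist u v ≠ 0 := by
        intro h0
        rcases SimpleGraph.dist_eq_zero_iff_eq_or_not_reachable.mp h0 with h | h
        · exact huv h
        · exact h (hu.reachable.trans hv.symm.reachable)
      have hne1 : G.dist u v ≠ 1 := by
        intro h
        have := h1' u v (dist_eq_one_iff_adj.mp h)
        omega
      omega
    have := h2 u v hd
    unfold Nat.dist at this
    omega
  · rintro ⟨h1, h2⟩
    refine ⟨fun u v huv => ?_, fun u v huv => ?_⟩
    · have := h1 u v huv
      unfold Nat.dist
      omega
    · obtain ⟨p, hp⟩ := exists_walk_of_dist_ne_zero (G := G) (u := u) (v := v) (by omega)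
      rw [huv] at hp
      have hne : f u ≠ f v := by
        intro hf
        have huv' : u ≠ v := by
          rintro rfl
          simp at huv
        match p, hp with
        | .cons (v := w) ha (.cons hb .nil), _ => exact h2 u v w huv' hf ha hb.symm
      unfold Nat.dist
      omega

/-- `f` spreads over `{0, …, k}` and uses as many labels as possible. -/
structure IsExtremal [Fintype V] (G : SimpleGraph V) (k : ℕ) (f : V → ℕ) : Prop where
  spread : IsSpread G f
  le : ∀ v, f v ≤ k
  max : ∀ g, IsSpread G g → (∀ v, g v ≤ k) →
    (Finset.univ.image g).card ≤ (Finset.univ.image f).card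

lemma exists_isExtremal [Fintype V] {G : SimpleGraph V} {k : ℕ} {f : V → ℕ}
    (hf : IsSpread G f) (hk : ∀ v, f v ≤ k) : ∃ g, IsExtremal G k g := by
  let S : Set ℕ := {m | ∃ g, IsSpread G g ∧ (∀ v, g v ≤ k) ∧ (Finset.univ.image g).card = m}
  have hne : S.Nonempty := ⟨_, f, hf, hk, rfl⟩
  have hbdd : BddAbove S := by
    refine ⟨Fintype.card V, ?_⟩
    rintro m ⟨g, -, -, rfl⟩
    exact Finset.card_image_le
  obtain ⟨g, hg, hgk, hgm⟩ := Nat.sSup_mem hne hbdd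
  exact ⟨g, hg, hgk, fun g' h1 h2 => hgm ▸ le_csSup hbdd ⟨g', h1, h2, rfl⟩⟩

/-- Reverse the order of the labels in the interval `[lo, hi]`. -/
def revLabel (lo hi : ℕ) (f : V → ℕ) (v : V) : ℕ :=
  if lo ≤ f v ∧ f v ≤ hi then lo + hi - f v else f v

lemma IsExtremal.revLabel [Fintype V] {G : SimpleGraph V} {k lo hi : ℕ} {f : V → ℕ}
    (hf : IsExtremal G k f) (hlo : ∀ v, f v + 1 ≠ lo) (hhi : ∀ v, f v ≠ hi + 1) (hk : hi ≤ k) :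
    IsExtremal G k (revLabel lo hi f) := by
  have hinj : ∀ u v, PaperPC.revLabel lo hi f u = PaperPC.revLabel lo hi f v → f u = f v := by
    intro u v huv
    unfold PaperPC.revLabel at huv
    split_ifs at huv <;> omega
  refine ⟨⟨fun u v huv => ?_, fun u v w huv h => hf.spread.no_common u v w huv (hinj u v h)⟩,
    fun v => ?_, fun g hg hgk => (hf.max g hg hgk).trans ?_⟩
  · have h1 := hf.spread.two_le u v huv
    have := hlo u
    have := hlo v
    have := hhi u
    have := hhi v
    unfold PaperPC.revLabel
    split_ifs <;> omega
  · have := hf.le v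
    unfold PaperPC.revLabel
    split_ifs <;> omega
  · set σ : ℕ → ℕ := fun i => if lo ≤ i ∧ i ≤ hi then lo + hi - i else i with hσ
    have h : Finset.univ.image f = (Finset.univ.image (PaperPC.revLabel lo hi f)).image σ := by
      rw [Finset.image_image]
      refine Finset.image_congr fun v _ => ?_
      simp only [hσ, Function.comp, PaperPC.revLabel]
      split_ifs <;> omega
    rw [h]
    exact Finset.card_image_le

/-- A vertex sharing its label sees, next to any hole, a neighbor. -/
lemma IsExtremal.exists_adj_of_hole [Fintype V] {G : SimpleGraph V} {k h : ℕ} {f : V → ℕ}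
    (hf : IsExtremal G k f) (hk : h ≤ k) (hh : ∀ v, f v ≠ h) {u v : V} (huv : u ≠ v)
    (he : f u = f v) : ∃ z, G.Adj u z ∧ (f z + 1 = h ∨ f z = h + 1) := by
  classical
  by_contra! hcon
  set g := Function.update f u h with hg
  have gu : g u = h := by simp [hg]
  have gne : ∀ p, p ≠ u → g p = f p := fun p hp => by simp [hg, hp]
  have hspread : IsSpread G g := by
    refine ⟨fun p q hpq => ?_, fun p q w hpq hgpq => ?_⟩
    · have h1 := hf.spread.two_le p q hpq
      by_cases hp : p = u
      · have hq : q ≠ u := fun hq => hpq.ne (hp.trans hq.symm)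
        have := hcon q (hp ▸ hpq)
        have := hh q
        rw [hp, gu, gne q hq]
        omega
      · by_cases hq : q = u
        · have := hcon p (hq ▸ hpq.symm)
          have := hh p
          rw [hq, gu, gne p hp]
          omega
        · rw [gne p hp, gne q hq]
          exact h1
    · by_cases hp : p = u
      · have hq : q ≠ u := fun hq => hpq (hp.trans hq.symm)
        rw [hp, gu, gne q hq] at hgpq
        exact absurd hgpq.symm (hh q)
      · by_cases hq : q = u
        · rw [hq, gu, gne p hp] at hgpq
          exact absurd hgpq (hh p)
        · rw [gne p hp, gne q hq] at hgpq
          exact hf.spread.no_common p q w hpq hgpq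
  have hle : ∀ p, g p ≤ k := fun p => by
    by_cases hp : p = u
    · rw [hp, gu]
      exact hk
    · rw [gne p hp]
      exact hf.le p
  have hlt : (Finset.univ.image f).card < (Finset.univ.image g).card := by
    refine Finset.card_lt_card (Finset.ssubset_iff_subset_ne.mpr ⟨?_, ?_⟩)
    · intro i hi
      obtain ⟨p, -, rfl⟩ := Finset.mem_image.mp hi
      by_cases hp : p = u
      · exact Finset.mem_image.mpr ⟨v, Finset.mem_univ _, by rw [gne v huv.symm, hp, he]⟩
      · exact Finset.mem_image.mpr ⟨p, Finset.mem_univ _, gne p hp⟩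
    · intro heq
      have : h ∈ Finset.univ.image f := heq ▸ Finset.mem_image.mpr ⟨u, Finset.mem_univ _, gu⟩
      obtain ⟨p, -, hp⟩ := Finset.mem_image.mp this
      exact hh p hp
  exact absurd (hf.max g hspread hle) (by omega)

/-- The vertices labeled `h - 1`. -/
def below [Fintype V] (f : V → ℕ) (h : ℕ) : Finset V := {v | f v + 1 = h}

/-- The vertices labeled `h + 1`. -/
def above [Fintype V] (f : V → ℕ) (h : ℕ) : Finset V := {v | f v = h + 1}

@[simp] lemma mem_below [Fintype V] {f : V → ℕ} {h : ℕ} {v : V} :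
    v ∈ below f h ↔ f v + 1 = h := by simp [below]

@[simp] lemma mem_above [Fintype V] {f : V → ℕ} {h : ℕ} {v : V} :
    v ∈ above f h ↔ f v = h + 1 := by simp [above]

/-- In an extremal labeling with a repeated label, the two label classes next to a hole are
nonempty and equinumerous. -/
lemma IsExtremal.card_below_eq_card_above [Fintype V] {G : SimpleGraph V} {k h : ℕ} {f : V → ℕ}
    (hf : IsExtremal G k f) (hk : h ≤ k) (hh : ∀ v, f v ≠ h) {u v : V} (huv : u ≠ v)
    (he : f u = f v) :
    (below f h).card = (above f h).card ∧ 1 ≤ (below f h).card := by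
  classical
  have key : ∀ A B : Finset V, (∀ p ∈ A, ∀ q ∈ A, f p = f q) →
      (∀ z, (f z + 1 = h ∨ f z = h + 1) → z ∈ A ∨ z ∈ B) → 2 ≤ A.card → A.card ≤ B.card := by
    intro A B hA hAB h2
    have hex : ∀ p ∈ A, ∃ z ∈ B, G.Adj p z := by
      intro p hp
      obtain ⟨q, hq, hqp⟩ := Finset.exists_mem_ne (s := A) (by omega) p
      obtain ⟨z, hz, hz'⟩ := hf.exists_adj_of_hole hk hh hqp.symm (hA p hp q hq)
      refine ⟨z, (hAB z hz').resolve_left fun hzA => ?_, hz⟩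
      have := hA p hp z hzA
      have := hf.spread.two_le p z hz
      omega
    choose! φ hφ hφ' using hex
    refine Finset.card_le_card_of_injOn φ hφ fun p hp q hq hpq => ?_
    by_contra hne
    exact hf.spread.no_common p q (φ p) hne (hA p hp q hq) (hφ' p hp) (hpq ▸ hφ' q hq)
  have hb := key (below f h) (above f h)
    (fun p hp q hq => by simp only [mem_below] at hp hq; omega)
    (fun z hz => by simpa using hz)
  have ha := key (above f h) (below f h)
    (fun p hp q hq => by simp only [mem_above] at hp hq; omega)
    (fun z hz => by simpa [or_comm] using hz)
  have hsum : 2 ≤ (below f h).card + (above f h).card := by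
    obtain ⟨x, hux, hx⟩ := hf.exists_adj_of_hole hk hh huv he
    obtain ⟨y, hvy, hy⟩ := hf.exists_adj_of_hole hk hh huv.symm he.symm
    have hxy : x ≠ y := fun hxy => hf.spread.no_common u v x huv he hux (hxy ▸ hvy)
    calc 2 = ({x, y} : Finset V).card := (Finset.card_pair hxy).symm
      _ ≤ (below f h ∪ above f h).card := by
        refine Finset.card_le_card fun z hz => ?_
        simp only [Finset.mem_insert, Finset.mem_singleton] at hz
        rcases hz with rfl | rfl <;> simpa
      _ ≤ _ := Finset.card_union_le _ _
  omega

/-- Across a hole with singleton neighboring classes, two vertices of equal label split the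
adjacencies. -/
lemma IsExtremal.adj_split [Fintype V] {G : SimpleGraph V} {k h : ℕ} {f : V → ℕ}
    (hf : IsExtremal G k f) (hk : h ≤ k) (hh : ∀ v, f v ≠ h) {u v x y : V} (huv : u ≠ v)
    (he : f u = f v) (hone : (below f h).card = 1) (hx : f x + 1 = h) (hy : f y = h + 1) :
    G.Adj u x ∧ G.Adj v y ∨ G.Adj u y ∧ G.Adj v x := by
  have hone' : (above f h).card = 1 :=
    (hf.card_below_eq_card_above hk hh huv he).1.symm.trans hone
  have hxu : ∀ z, f z + 1 = h → z = x := fun z hz =>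
    Finset.card_le_one.mp hone.le z (by simpa) x (by simpa)
  have hyu : ∀ z, f z = h + 1 → z = y := fun z hz =>
    Finset.card_le_one.mp hone'.le z (by simpa) y (by simpa)
  obtain ⟨p, hup, hp⟩ := hf.exists_adj_of_hole hk hh huv he
  obtain ⟨q, hvq, hq⟩ := hf.exists_adj_of_hole hk hh huv.symm he.symm
  have hpq : p ≠ q := fun hpq => hf.spread.no_common u v p huv he hup (hpq ▸ hvq)
  rcases hp with hp | hp <;> rcases hq with hq | hq
  · exact absurd ((hxu p hp).trans (hxu q hq).symm) hpq
  · exact Or.inl ⟨hxu p hp ▸ hup, hyu q hq ▸ hvq⟩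
  · exact Or.inr ⟨hyu p hp ▸ hup, hxu q hq ▸ hvq⟩
  · exact absurd ((hyu p hp).trans (hyu q hq).symm) hpq

lemma IsExtremal.card_below_eq_of_lt [Fintype V] {G : SimpleGraph V} {k h h' : ℕ} {f : V → ℕ}
    (hf : IsExtremal G k f) (hlt : h < h') (hk : h' ≤ k) (hh : ∀ v, f v ≠ h)
    (hh' : ∀ v, f v ≠ h') {u v : V} (huv : u ≠ v) (he : f u = f v) :
    h + 1 < h' ∧ (below f h).card = (below f h').card := by
  have h1 := hf.card_below_eq_card_above (by omega) hh huv he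
  obtain ⟨y, hy⟩ := Finset.card_pos.mp (show 0 < (above f h).card by omega)
  rw [mem_above] at hy
  have hlt' : h + 1 < h' := by
    have := hh' y
    omega
  refine ⟨hlt', ?_⟩
  have hext : IsExtremal G k (PaperPC.revLabel (h + 1) (h' - 1) f) :=
    hf.revLabel (fun w => by have := hh w; omega) (fun w => by have := hh' w; omega) (by omega)
  have hhole : ∀ w, PaperPC.revLabel (h + 1) (h' - 1) f w ≠ h := by
    intro w
    have := hh w
    unfold PaperPC.revLabel
    split_ifs <;> omega
  have h2 := (hext.card_below_eq_card_above (by omega) hhole huv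
    (by simp only [PaperPC.revLabel, he])).1
  have h3 : below (PaperPC.revLabel (h + 1) (h' - 1) f) h = below f h := by
    ext w
    simp only [mem_below, PaperPC.revLabel]
    split_ifs <;> omega
  have h4 : above (PaperPC.revLabel (h + 1) (h' - 1) f) h = below f h' := by
    ext w
    simp only [mem_below, mem_above, PaperPC.revLabel]
    split_ifs <;> omega
  rw [← h3, h2, h4]

/-- Singleton classes around one hole rule out any second hole. -/
lemma IsExtremal.hole_unique_of_card_eq_one [Fintype V] {G : SimpleGraph V} {k h h' : ℕ}
    {f : V → ℕ} (hf : IsExtremal G k f) (hlt : h < h') (hk : h' ≤ k) (hh : ∀ v, f v ≠ h)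
    (hh' : ∀ v, f v ≠ h') {u v : V} (huv : u ≠ v) (he : f u = f v)
    (hone : (below f h).card = 1) : False := by
  obtain ⟨hlt', hcard⟩ := hf.card_below_eq_of_lt hlt hk hh hh' huv he
  have hone' : (below f h').card = 1 := hcard.symm.trans hone
  have hab' := (hf.card_below_eq_card_above hk hh' huv he).1
  obtain ⟨x, hx⟩ := Finset.card_pos.mp (show 0 < (below f h).card by omega)
  obtain ⟨z, hz⟩ := Finset.card_pos.mp (show 0 < (below f h').card by omega)
  obtain ⟨w, hw⟩ := Finset.card_pos.mp (show 0 < (above f h').card by omega)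
  rw [mem_below] at hx hz
  rw [mem_above] at hw
  have hzw := hf.adj_split hk hh' huv he hone' hz hw
  have hxz : G.Adj u x ∧ G.Adj v z ∨ G.Adj u z ∧ G.Adj v x := by
    have hext : IsExtremal G k (PaperPC.revLabel (h + 1) (h' - 1) f) :=
      hf.revLabel (fun p => by have := hh p; omega) (fun p => by have := hh' p; omega) (by omega)
    refine hext.adj_split (h := h) (by omega) (fun p => ?_) huv
      (by simp only [PaperPC.revLabel, he]) ?_ ?_ ?_
    · have := hh p
      unfold PaperPC.revLabel
      split_ifs <;> omega
    · rw [← hone]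
      congr 1
      ext p
      simp only [mem_below, PaperPC.revLabel]
      split_ifs <;> omega
    · unfold PaperPC.revLabel
      split_ifs <;> omega
    · unfold PaperPC.revLabel
      split_ifs <;> omega
  have hxw : G.Adj u x ∧ G.Adj v w ∨ G.Adj u w ∧ G.Adj v x := by
    set f₁ := PaperPC.revLabel 0 (h - 1) f with hf₁
    have hval : ∀ p, f₁ p = if f p ≤ h - 1 then h - 1 - f p else f p := fun p => by
      simp [hf₁, PaperPC.revLabel]
    have hext₁ : IsExtremal G k f₁ :=
      hf.revLabel (fun p => by omega) (fun p => by have := hh p; omega) (by omega)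
    have hh₁' : ∀ p, f₁ p ≠ h' := fun p => by
      have := hh' p
      rw [hval]
      split_ifs <;> omega
    set f₂ := PaperPC.revLabel 0 (h' - 1) f₁ with hf₂
    have hval₂ : ∀ p, f₂ p = if f₁ p ≤ h' - 1 then h' - 1 - f₁ p else f₁ p := fun p => by
      simp [hf₂, PaperPC.revLabel]
    have hext₂ : IsExtremal G k f₂ :=
      hext₁.revLabel (fun p => by omega) (fun p => by have := hh₁' p; omega) (by omega)
    have hh₂' : ∀ p, f₂ p ≠ h' := fun p => by
      have := hh₁' p
      rw [hval₂]
      split_ifs <;> omega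
    have he₂ : f₂ u = f₂ v := by
      rw [hval₂, hval₂, hval u, hval v, he]
    refine hext₂.adj_split hk hh₂' huv he₂ ?_ ?_ ?_
    · rw [(hext₂.card_below_eq_card_above hk hh₂' huv he₂).1, ← hone', hab']
      congr 1
      ext p
      rw [mem_above, mem_above, hval₂, hval]
      split_ifs <;> omega
    · rw [hval₂, hval]
      split_ifs <;> omega
    · rw [hval₂, hval]
      split_ifs <;> omega
  have hnc := hf.spread.no_common u v
  have hcx := hnc x huv he
  have hcz := hnc z huv he
  have hcw := hnc w huv he
  tauto

/-- If there is a unique hole, with singleton neighboring classes, and exactly one repetition of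
a label, below the hole, then the labeling can be improved. -/
lemma IsExtremal.false_of_single_repetition [Fintype V] {G : SimpleGraph V} {k h : ℕ} {f : V → ℕ}
    (hf : IsExtremal G k f) (hk : h ≤ k) (hh : ∀ v, f v ≠ h) {u v : V} (huv : u ≠ v)
    (he : f u = f v) (hone : (below f h).card = 1) (hlt : f u < h)
    (hrep : ∀ p q, p ≠ q → f p = f q → (p = u ∨ q = u) ∧ (p = v ∨ q = v))
    {x y : V} (hx : f x + 1 = h) (hy : f y = h + 1) (hux : G.Adj u x) (hvy : G.Adj v y) :
    False := by
  classical
  have hone' : (above f h).card = 1 :=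
    (hf.card_below_eq_card_above hk hh huv he).1.symm.trans hone
  have hyu : ∀ z, f z = h + 1 → z = y := fun z hz =>
    Finset.card_le_one.mp hone'.le z (by simpa) y (by simpa)
  have hu_above : ∀ z, f z = h + 1 → ¬G.Adj u z := fun z hz hadj =>
    hf.spread.no_common u v y huv he (hyu z hz ▸ hadj) hvy
  have hv_zero : ∀ z, f z = 0 → ¬G.Adj v z := by
    intro z hz hadj
    have hval : ∀ p, PaperPC.revLabel 0 (h - 1) f p = if f p ≤ h - 1 then h - 1 - f p else f p :=
      fun p => by simp [PaperPC.revLabel]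
    have hext : IsExtremal G k (PaperPC.revLabel 0 (h - 1) f) :=
      hf.revLabel (fun p => by omega) (fun p => by have := hh p; omega) (by omega)
    have hhole : ∀ p, PaperPC.revLabel 0 (h - 1) f p ≠ h := fun p => by
      have := hh p
      rw [hval]
      split_ifs <;> omega
    have he' : PaperPC.revLabel 0 (h - 1) f u = PaperPC.revLabel 0 (h - 1) f v := by
      rw [hval, hval, he]
    have hone₁ : (below (PaperPC.revLabel 0 (h - 1) f) h).card = 1 := by
      rw [(hext.card_below_eq_card_above hk hhole huv he').1]
      refine Eq.trans ?_ hone'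
      congr 1
      ext p
      rw [mem_above, mem_above, hval]
      split_ifs <;> omega
    have hsplit := hext.adj_split (x := z) (y := y) hk hhole huv he' hone₁
      (by rw [hval]; split_ifs <;> omega) (by rw [hval]; split_ifs <;> omega)
    have hnz := hf.spread.no_common u v z huv he
    have hny := hf.spread.no_common u v y huv he
    tauto
  set g : V → ℕ := fun w => if w = u then h else if w = v then h - 1 - f u else
    if f w < f u then f w + h - f u else if f w < h then h - 1 - f w else f w with hg
  have gu : g u = h := by simp [hg]
  have gv : g v = h - 1 - f u := by simp [hg, huv.symm]
  have gw : ∀ w, w ≠ u → w ≠ v → f w ≠ f u ∧ g w =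
      if f w < f u then f w + h - f u else if f w < h then h - 1 - f w else f w := by
    intro w hwu hwv
    refine ⟨fun hw => ?_, by simp [hg, hwu, hwv]⟩
    have := hrep w u hwu hw
    tauto
  have hinj : Function.Injective g := by
    intro p q hpq
    by_contra hne
    have hpq' := hrep p q hne
    have := hh p
    have := hh q
    by_cases hpu : p = u
    · by_cases hqv : q = v
      · rw [hpu, hqv, gu, gv] at hpq
        omega
      · obtain ⟨h1, h2⟩ := gw q (fun hq => hne (hpu.trans hq.symm)) hqv
        rw [hpu, gu, h2] at hpq
        split_ifs at hpq <;> omega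
    · by_cases hpv : p = v
      · by_cases hqu : q = u
        · rw [hpv, hqu, gu, gv] at hpq
          omega
        · obtain ⟨h1, h2⟩ := gw q hqu (fun hq => hne (hpv.trans hq.symm))
          rw [hpv, gv, h2] at hpq
          split_ifs at hpq <;> omega
      · obtain ⟨h1, h2⟩ := gw p hpu hpv
        by_cases hqu : q = u
        · rw [hqu, gu, h2] at hpq
          split_ifs at hpq <;> omega
        · by_cases hqv : q = v
          · rw [hqv, gv, h2] at hpq
            split_ifs at hpq <;> omega
          · obtain ⟨h3, h4⟩ := gw q hqu hqv
            have hfne : f p ≠ f q := fun hfe => by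
              have := hpq' hfe
              tauto
            rw [h2, h4] at hpq
            split_ifs at hpq <;> omega
  have hu_far : ∀ q, q ≠ u → G.Adj u q → g u + 2 ≤ g q ∨ g q + 2 ≤ g u := by
    intro q hqu hadj
    have h1 := hf.spread.two_le u q hadj
    have hqv : q ≠ v := by
      rintro rfl
      omega
    have h2 : f q ≠ h + 1 := fun h' => hu_above q h' hadj
    have h3 := hh q
    obtain ⟨h4, h5⟩ := gw q hqu hqv
    rw [gu, h5]
    split_ifs <;> omega
  have hv_far : ∀ q, q ≠ v → G.Adj v q → g v + 2 ≤ g q ∨ g q + 2 ≤ g v := by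
    intro q hqv hadj
    have h1 := hf.spread.two_le v q hadj
    have hqu : q ≠ u := by
      rintro rfl
      omega
    have h2 : f q ≠ 0 := fun h' => hv_zero q h' hadj
    have h3 := hh q
    obtain ⟨h4, h5⟩ := gw q hqu hqv
    rw [gv, h5]
    split_ifs <;> omega
  have hspread : IsSpread G g := by
    refine ⟨fun p q hadj => ?_, fun p q w hpq hgpq => absurd (hinj hgpq) hpq⟩
    by_cases hpu : p = u
    · subst hpu
      exact hu_far q hadj.ne' hadj
    by_cases hqu : q = u
    · subst hqu
      exact (hu_far p hadj.ne hadj.symm).symm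
    by_cases hpv : p = v
    · subst hpv
      exact hv_far q hadj.ne' hadj
    by_cases hqv : q = v
    · subst hqv
      exact (hv_far p hadj.ne hadj.symm).symm
    have h1 := hf.spread.two_le p q hadj
    have h2 := hh p
    have h3 := hh q
    obtain ⟨h4, h5⟩ := gw p hpu hpv
    obtain ⟨h6, h7⟩ := gw q hqu hqv
    rw [h5, h7]
    split_ifs <;> omega
  have hle : ∀ w, g w ≤ k := by
    intro w
    have := hf.le w
    simp only [hg]
    split_ifs <;> omega
  have h1 := hf.max g hspread hle
  rw [Finset.card_image_of_injective _ hinj] at h1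
  have h2 : Set.InjOn f (Finset.univ : Finset V) :=
    Finset.injOn_of_card_image_eq (le_antisymm Finset.card_image_le h1)
  exact huv (h2 (by simp) (by simp) he)

/-- If every hole has non-singleton neighboring classes, there are few labels. -/
lemma IsExtremal.lt_card_of_two_le [Fintype V] {G : SimpleGraph V} {k : ℕ} {f : V → ℕ}
    (hf : IsExtremal G k f) {u v : V} (huv : u ≠ v) (he : f u = f v) {h₀ : ℕ} (hk₀ : h₀ ≤ k)
    (hh₀ : ∀ v, f v ≠ h₀)
    (hbig : ∀ h ≤ k, (∀ v, f v ≠ h) → 2 ≤ (below f h).card) :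
    k + 1 < Fintype.card V := by
  classical
  set I := Finset.univ.image f with hI
  set U := Finset.range (k + 1) \ I with hU
  have hmemI : ∀ i, i ∈ I ↔ ∃ p, f p = i := fun i => by simp [hI]
  have hmemU : ∀ h, h ∈ U ↔ h ≤ k ∧ ∀ p, f p ≠ h := fun h => by
    simp [hU, hmemI]
  have hUne : U.Nonempty := ⟨h₀, (hmemU _).mpr ⟨hk₀, hh₀⟩⟩
  set b := U.min' hUne with hb
  have hbU : b ∈ U := U.min'_mem hUne
  have hbig' := fun h (hU' : h ∈ U) => hbig h ((hmemU h).mp hU').1 ((hmemU h).mp hU').2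
  have heq' := fun h (hU' : h ∈ U) =>
    (hf.card_below_eq_card_above ((hmemU h).mp hU').1 ((hmemU h).mp hU').2 huv he).1
  have hb1 : 1 ≤ b := by
    obtain ⟨p, hp⟩ := Finset.card_pos.mp (show 0 < (below f b).card by have := hbig' b hbU; omega)
    rw [mem_below] at hp
    omega
  set T := insert (b - 1) (U.image (· + 1)) with hT
  have hTcard : T.card = U.card + 1 := by
    rw [hT, Finset.card_insert_of_notMem, Finset.card_image_of_injective _ (add_left_injective 1)]
    intro hmem
    obtain ⟨c, hc, hcb⟩ := Finset.mem_image.mp hmem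
    have := U.min'_le c hc
    omega
  have hTfib : ∀ i ∈ T, 2 ≤ (Finset.univ.filter (f · = i)).card := by
    intro i hi
    rcases Finset.mem_insert.mp hi with rfl | hi
    · refine (hbig' b hbU).trans (Finset.card_le_card fun p hp => ?_)
      rw [mem_below] at hp
      simp only [Finset.mem_filter, Finset.mem_univ, true_and]
      omega
    · obtain ⟨c, hc, rfl⟩ := Finset.mem_image.mp hi
      have := hbig' c hc
      rw [heq' c hc] at this
      exact this
  have hTI : T ⊆ I := fun i hi => by
    obtain ⟨p, hp⟩ := Finset.card_pos.mp (show 0 < (Finset.univ.filter (f · = i)).card by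
      have := hTfib i hi; omega)
    exact (hmemI i).mpr ⟨p, (Finset.mem_filter.mp hp).2⟩
  have hIU : I.card + U.card = k + 1 := by
    have hsub : I ⊆ Finset.range (k + 1) := fun i hi => by
      obtain ⟨p, rfl⟩ := (hmemI i).mp hi
      exact Finset.mem_range.mpr (Nat.lt_succ_of_le (hf.le p))
    have h1 := Finset.card_sdiff_add_card_eq_card hsub
    rw [Finset.card_range, ← hU] at h1
    omega
  have hsum : Fintype.card V = ∑ i ∈ I, (Finset.univ.filter (f · = i)).card :=
    Finset.card_eq_sum_card_image f Finset.univ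
  have hlow : ∑ i ∈ I, (1 + if i ∈ T then 1 else 0) ≤
      ∑ i ∈ I, (Finset.univ.filter (f · = i)).card := by
    refine Finset.sum_le_sum fun i hi => ?_
    split_ifs with hiT
    · exact hTfib i hiT
    · obtain ⟨p, hp⟩ := (hmemI i).mp hi
      exact Finset.card_pos.mpr ⟨p, by simpa⟩
  rw [Finset.sum_add_distrib, Finset.sum_boole, Finset.filter_mem_eq_inter,
    Finset.inter_eq_right.mpr hTI] at hlow
  simp only [Finset.sum_const, smul_eq_mul, mul_one, Nat.cast_id] at hlow
  omega

/-- Spans at least `|V| - 1` can be realized by injective labelings. -/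
theorem IsSpread.exists_injective [Fintype V] {G : SimpleGraph V} {k : ℕ} {f : V → ℕ}
    (hf : IsSpread G f) (hfk : ∀ v, f v ≤ k) (hk : Fintype.card V ≤ k + 1) :
    ∃ g : V → ℕ, IsSpread G g ∧ (∀ v, g v ≤ k) ∧ Function.Injective g := by
  classical
  obtain ⟨g, hg⟩ := exists_isExtremal hf hfk
  refine ⟨g, hg.spread, hg.le, fun u v he => ?_⟩
  by_contra huv
  have hsub : Finset.univ.image g ⊆ Finset.range (k + 1) := fun i hi => by
    obtain ⟨p, -, rfl⟩ := Finset.mem_image.mp hi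
    exact Finset.mem_range.mpr (Nat.lt_succ_of_le (hg.le p))
  have himg : (Finset.univ.image g).card < Fintype.card V := by
    refine lt_of_le_of_ne Finset.card_image_le fun hc => huv ?_
    exact Finset.injOn_of_card_image_eq (s := Finset.univ) (f := g) hc (by simp) (by simp) he
  obtain ⟨h₀, hh₀, hn₀⟩ := Finset.exists_mem_notMem_of_card_lt_card
    (show (Finset.univ.image g).card < (Finset.range (k + 1)).card by
      rw [Finset.card_range]; omega)
  have hnot : ∀ h, h ∉ Finset.univ.image g → ∀ p, g p ≠ h := fun h hn p hp =>
    hn (Finset.mem_image.mpr ⟨p, Finset.mem_univ _, hp⟩)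
  have hk₀ : h₀ ≤ k := Nat.lt_succ_iff.mp (Finset.mem_range.mp hh₀)
  obtain ⟨h, hhk, hh, hsmall⟩ : ∃ h ≤ k, (∀ p, g p ≠ h) ∧ (below g h).card < 2 := by
    by_contra! hbig
    have := hg.lt_card_of_two_le huv he hk₀ (hnot h₀ hn₀) hbig
    omega
  obtain ⟨hba, hpos⟩ := hg.card_below_eq_card_above hhk hh huv he
  have hone : (below g h).card = 1 := by omega
  have huniq : ∀ h' ≤ k, (∀ p, g p ≠ h') → h' = h := by
    intro h' hk' hh'
    rcases lt_trichotomy h h' with hlt | heq | hlt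
    · exact (hg.hole_unique_of_card_eq_one hlt hk' hh hh' huv he hone).elim
    · exact heq.symm
    · have h1 := (hg.card_below_eq_of_lt hlt hhk hh' hh huv he).2
      exact (hg.hole_unique_of_card_eq_one hlt hhk hh' hh huv he (h1.trans hone)).elim
  have hcard : k ≤ (Finset.univ.image g).card := by
    have h1 : (Finset.range (k + 1)).erase h ⊆ Finset.univ.image g := fun i hi => by
      by_contra hn
      obtain ⟨h2, h3⟩ := Finset.mem_erase.mp hi
      exact h2 (huniq i (Nat.lt_succ_iff.mp (Finset.mem_range.mp h3)) (hnot i hn))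
    have h2 := Finset.card_le_card h1
    rw [Finset.card_erase_of_mem (Finset.mem_range.mpr (Nat.lt_succ_of_le hhk)),
      Finset.card_range] at h2
    omega
  have hinjOn : ∀ a b : V, a ≠ b → g a = g b → Set.InjOn g ((Finset.univ.erase b : Finset V)) := by
    intro a b hab hgab
    apply Finset.injOn_of_card_image_eq
    refine le_antisymm Finset.card_image_le ?_
    have h1 : Finset.univ.image g ⊆ (Finset.univ.erase b).image g := fun i hi => by
      obtain ⟨p, -, rfl⟩ := Finset.mem_image.mp hi
      by_cases hp : p = b
      · exact Finset.mem_image.mpr ⟨a, by simpa using hab, by rw [hp, hgab]⟩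
      · exact Finset.mem_image.mpr ⟨p, by simpa using hp, rfl⟩
    have h2 := Finset.card_le_card h1
    rw [Finset.card_erase_of_mem (Finset.mem_univ _), Finset.card_univ]
    omega
  have hmem : ∀ a b : V, a ≠ b → g a = g b → ∀ p q, p ≠ q → g p = g q → p = b ∨ q = b := by
    intro a b hab hgab p q hpq hgpq
    by_contra! hcon
    exact hpq (hinjOn a b hab hgab (by simpa using hcon.1) (by simpa using hcon.2) hgpq)
  have hrep : ∀ p q, p ≠ q → g p = g q → (p = u ∨ q = u) ∧ (p = v ∨ q = v) :=
    fun p q hpq hgpq => ⟨hmem v u (Ne.symm huv) he.symm p q hpq hgpq, hmem u v huv he p q hpq hgpq⟩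
  obtain ⟨x, hx⟩ := Finset.card_pos.mp (show 0 < (below g h).card by omega)
  obtain ⟨y, hy⟩ := Finset.card_pos.mp (show 0 < (above g h).card by omega)
  have honea : (above g h).card = 1 := by omega
  rw [mem_below] at hx
  rw [mem_above] at hy
  have hsplit := hg.adj_split hhk hh huv he hone hx hy
  rcases lt_or_gt_of_ne (hh u) with hlt | hgt
  · rcases hsplit with ⟨h1, h2⟩ | ⟨h1, h2⟩
    · exact hg.false_of_single_repetition hhk hh huv he hone hlt hrep hx hy h1 h2
    · exact hg.false_of_single_repetition hhk hh (Ne.symm huv) he.symm hone (he ▸ hlt)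
        (fun p q hpq hgpq => (hrep p q hpq hgpq).symm) hx hy h2 h1
  · have hval : ∀ p, revLabel 0 k g p = k - g p := fun p => by simp [revLabel, hg.le p]
    have hle := hg.le
    have hext : IsExtremal G k (revLabel 0 k g) :=
      hg.revLabel (fun p => by omega) (fun p => by have := hle p; omega) le_rfl
    have hhole : ∀ p, revLabel 0 k g p ≠ k - h := fun p => by
      have := hle p
      have := hh p
      rw [hval]
      omega
    have hone' : (below (revLabel 0 k g) (k - h)).card = 1 := by
      rw [← honea]
      congr 1
      ext p
      have := hle p
      have := hle y
      rw [mem_below, mem_above, hval]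
      omega
    have hx' : revLabel 0 k g x = k - h + 1 := by
      have := hle x
      rw [hval]
      omega
    have hy' : revLabel 0 k g y + 1 = k - h := by
      have := hle y
      rw [hval]
      omega
    have he' : revLabel 0 k g u = revLabel 0 k g v := by rw [hval, hval, he]
    have hlt : revLabel 0 k g u < k - h := by
      have := hle u
      rw [hval]
      omega
    have hrep' : ∀ p q, p ≠ q → revLabel 0 k g p = revLabel 0 k g q →
        (p = u ∨ q = u) ∧ (p = v ∨ q = v) := fun p q hpq hgpq => by
      have := hle p
      have := hle q
      rw [hval, hval] at hgpq
      exact hrep p q hpq (by omega)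
    rcases hsplit with ⟨h1, h2⟩ | ⟨h1, h2⟩
    · exact hext.false_of_single_repetition (by omega) hhole (Ne.symm huv) he'.symm hone'
        (he' ▸ hlt) (fun p q hpq hgpq => (hrep' p q hpq hgpq).symm) hy' hx' h2 h1
    · exact hext.false_of_single_repetition (by omega) hhole huv he' hone' hlt hrep' hy' hx' h1 h2

/-- A connected component of a finite graph of maximum degree at most two is traversed by a
path. -/
lemma exists_isChain_of_ndeg_le_two [Fintype V] {H : SimpleGraph V} (hH : ∀ v, ndeg H v ≤ 2)
    (C : H.ConnectedComponent) :
    ∃ l : List V, l.Nodup ∧ l.IsChain H.Adj ∧ ∀ v, v ∈ l ↔ H.connectedComponentMk v = C := by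
  classical
  let P : List V → Prop := fun l =>
    l.Nodup ∧ l.IsChain H.Adj ∧ ∀ v ∈ l, H.connectedComponentMk v = C
  obtain ⟨r, hr⟩ := C.exists_rep
  let S : Set ℕ := {n | ∃ l, P l ∧ l.length = n}
  have hSr : 1 ∈ S := ⟨[r], ⟨by simp, by simp, fun v hv => List.mem_singleton.mp hv ▸ hr⟩, rfl⟩
  have hS : BddAbove S := by
    refine ⟨Fintype.card V, ?_⟩
    rintro n ⟨l, hl, rfl⟩
    exact hl.1.length_le_card
  obtain ⟨l, ⟨hnd, hch, hC⟩, hlen⟩ := Nat.sSup_mem ⟨1, hSr⟩ hS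
  have hmax : ∀ l', P l' → l'.length ≤ l.length := fun l' hl' => by
    rw [hlen]
    exact le_csSup hS ⟨l', hl', rfl⟩
  have hpos : 1 ≤ l.length := hlen ▸ le_csSup hS hSr
  have hclosed : ∀ v w, v ∈ l → H.Adj v w → w ∈ l := by
    intro v w hv hvw
    by_contra hw
    have hwC : H.connectedComponentMk w = C :=
      (ConnectedComponent.sound hvw.symm.reachable).trans (hC v hv)
    obtain ⟨s, t, rfl⟩ := List.append_of_mem hv
    rcases List.eq_nil_or_concat s with rfl | ⟨s, p, rfl⟩
    · have := hmax (w :: v :: t)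
        ⟨List.nodup_cons.mpr ⟨hw, hnd⟩, by simpa using ⟨hvw.symm, hch⟩, fun z hz => by
          rcases List.mem_cons.mp hz with rfl | hz
          · exact hwC
          · exact hC z hz⟩
      simp at this
    · rcases t with _ | ⟨q, t⟩
      · have := hmax ((s ++ [p] ++ [v]) ++ [w])
          ⟨by
            rw [List.nodup_append]
            exact ⟨by simpa using hnd, by simp, fun a ha b hb hab => hw (by simp_all)⟩,
          by
            rw [List.isChain_append]
            exact ⟨by simpa using hch, by simp, by simpa using hvw⟩,
          fun z hz => by
            rcases List.mem_append.mp hz with hz | hz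
            · exact hC z (by simpa using hz)
            · rw [List.mem_singleton.mp hz]
              exact hwC⟩
        simp at this
      · have hpv : H.Adj p v ∧ H.Adj v q := by
          have h1 : (s ++ ([p, v, q] ++ t)).IsChain H.Adj := by simpa using hch
          have h2 := (List.isChain_append.mp (List.isChain_append.mp h1).2.1).1
          simpa using h2
        have hpq : p ≠ q := by
          rintro rfl
          simp [List.nodup_append] at hnd
        have hpw : p ≠ w := by
          rintro rfl
          simp at hw
        have hqw : q ≠ w := by
          rintro rfl
          simp at hw
        have h3 : ({p, q, w} : Finset V).card = 3 := Finset.card_eq_three.mpr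
          ⟨p, q, w, hpq, hpw, hqw, rfl⟩
        have h4 : (({p, q, w} : Finset V) : Set V) ⊆ H.neighborSet v := by
          intro z hz
          simp only [Finset.coe_insert, Finset.coe_singleton, Set.mem_insert_iff,
            Set.mem_singleton_iff] at hz
          rcases hz with rfl | rfl | rfl
          · exact hpv.1.symm
          · exact hpv.2
          · exact hvw
        have h5 := Set.ncard_le_ncard h4 (Set.toFinite _)
        rw [Set.ncard_coe_finset, h3] at h5
        have := hH v
        unfold ndeg at this
        omega
  refine ⟨l, hnd, hch, fun v => ⟨hC v, fun hv => ?_⟩⟩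
  obtain ⟨a, ha⟩ := List.exists_mem_of_length_pos hpos
  have hreach : H.Reachable a v := ConnectedComponent.exact ((hC a ha).trans hv.symm)
  obtain ⟨p⟩ := hreach
  induction p with
  | nil => exact ha
  | cons hadj _ ih => exact ih hv (hclosed _ _ ha hadj)

/-- A path covering of the complement with `c` paths yields an injective labeling with span at
most `|V| + c - 2`. -/
lemma exists_isSpread_of_path_cover [Fintype V] {G H : SimpleGraph V} (hle : H ≤ Gᶜ)
    (hH : ∀ v, ndeg H v ≤ 2) :
    ∃ f : V → ℕ, IsSpread G f ∧ ∀ v, f v + 2 ≤ Fintype.card V + numPaths H := by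
  classical
  choose l hnd hch hmem using exists_isChain_of_ndeg_le_two hH
  let e := Fintype.equivFin H.ConnectedComponent
  let off : H.ConnectedComponent → ℕ := fun C => ∑ D with e D < e C, ((l D).length + 1)
  have hoff : ∀ C D, e C < e D → off C + (l C).length + 1 ≤ off D := by
    intro C D hCD
    have h1 : insert C (Finset.univ.filter (e · < e C)) ⊆ Finset.univ.filter (e · < e D) := by
      intro B hB
      simp only [Finset.mem_insert, Finset.mem_filter, Finset.mem_univ, true_and] at hB ⊢
      rcases hB with rfl | hB
      · exact hCD
      · exact hB.trans hCD
    have h2 := Finset.sum_le_sum_of_subset (f := fun D => (l D).length + 1) h1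
    rw [Finset.sum_insert (by simp)] at h2
    simp only [off]
    omega
  have htot : ∑ C, ((l C).length + 1) = Fintype.card V + numPaths H := by
    rw [Finset.sum_add_distrib, numPaths, Nat.card_eq_fintype_card]
    congr 1
    · rw [← Finset.card_univ, Finset.card_eq_sum_card_fiberwise
        (f := H.connectedComponentMk) (t := Finset.univ) (by simp)]
      refine Finset.sum_congr rfl fun C _ => ?_
      rw [← List.toFinset_card_of_nodup (hnd C)]
      congr 1
      ext v
      simp [hmem]
    · simp
  have hofftot : ∀ C, off C + (l C).length + 1 ≤ Fintype.card V + numPaths H := by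
    intro C
    rw [← htot]
    have h2 := Finset.sum_le_sum_of_subset (f := fun D => (l D).length + 1)
      (Finset.subset_univ (insert C (Finset.univ.filter (e · < e C))))
    rw [Finset.sum_insert (by simp)] at h2
    simp only [off]
    omega
  let κ : V → H.ConnectedComponent := H.connectedComponentMk
  let f : V → ℕ := fun v => off (κ v) + (l (κ v)).idxOf v
  have hidx : ∀ v, (l (κ v)).idxOf v < (l (κ v)).length := fun v =>
    List.idxOf_lt_length_iff.mpr ((hmem _ v).mpr rfl)
  have hfar : ∀ u v, e (κ u) < e (κ v) → f u + 2 ≤ f v := by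
    intro u v huv
    have := hoff _ _ huv
    have := hidx u
    simp only [f]
    omega
  have hadj : ∀ u v, κ u = κ v → (l (κ u)).idxOf u + 1 = (l (κ v)).idxOf v → H.Adj u v := by
    intro u v huv hi
    have hu := hidx u
    have hv := hidx v
    rw [← huv] at hi hv
    have h1 := List.isChain_iff_getElem.mp (hch (κ u)) ((l (κ u)).idxOf u) (by omega)
    simp only [hi] at h1
    rwa [List.getElem_idxOf, List.getElem_idxOf] at h1
  have hinj : ∀ u v, κ u = κ v → (l (κ u)).idxOf u = (l (κ v)).idxOf v → u = v := by
    intro u v huv hi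
    have hu := hidx u
    have hv := hidx v
    rw [← huv] at hi hv
    rw [← List.getElem_idxOf hu, ← List.getElem_idxOf hv]
    simp only [hi]
  refine ⟨f, ⟨fun u v huv => ?_, fun u v w huv hf => ?_⟩, fun v => ?_⟩
  · rcases lt_trichotomy (e (κ u)) (e (κ v)) with h | h | h
    · exact Or.inl (hfar u v h)
    · have hκ := e.injective h
      have h1 : ¬H.Adj u v := fun h => ((compl_adj G u v).mp (hle h)).2 huv
      have h2 := mt (hadj u v hκ) h1
      have h3 := mt (hadj v u hκ.symm) fun h => h1 h.symm
      have h4 := mt (hinj u v hκ) huv.ne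
      simp only [f, hκ] at h2 h3 h4 ⊢
      omega
    · exact Or.inr (hfar v u h)
  · rcases lt_trichotomy (e (κ u)) (e (κ v)) with h | h | h
    · have := hfar u v h
      omega
    · have hκ := e.injective h
      have h4 := mt (hinj u v hκ) huv
      simp only [f, hκ] at h4 hf
      omega
    · have := hfar v u h
      omega
  · have := hofftot (κ v)
    have := hidx v
    simp only [f]
    omega

/-- The graph joining vertices with consecutive labels. -/
def consecutive (f : V → ℕ) : SimpleGraph V where
  Adj u v := f u + 1 = f v ∨ f v + 1 = f u
  symm := ⟨fun _ _ h => h.symm⟩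
  loopless := ⟨fun _ h => by omega⟩

lemma consecutive_le_compl {G : SimpleGraph V} {f : V → ℕ} (hf : IsSpread G f) :
    consecutive f ≤ Gᶜ := by
  intro u v huv
  refine (compl_adj G u v).mpr ⟨huv.ne, fun h => ?_⟩
  have := hf.two_le u v h
  rcases huv with huv | huv <;> omega

lemma isLinearForest_consecutive {f : V → ℕ} (hf : Function.Injective f) :
    IsLinearForest (consecutive f) := by
  constructor
  · have key : ∀ u v, f u + 1 = f v → (consecutive f).IsBridge s(u, v) := by
      intro u v huv
      rw [isBridge_iff]
      rintro ⟨p⟩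
      have hp : ∀ a b, ((consecutive f).deleteEdges {s(u, v)}).Walk a b → f a ≤ f u →
          f b ≤ f u := by
        intro a b p
        induction p with
        | nil => exact id
        | @cons a b c hab _ ih =>
          refine fun ha => ih ?_
          rw [deleteEdges_adj] at hab
          by_contra hb
          rcases hab.1 with h | h
          · have h1 : a = u := hf (by omega)
            have h2 : b = v := hf (by omega)
            exact hab.2 (by rw [h1, h2]; rfl)
          · omega
      have := hp u v p le_rfl
      omega
    rw [isAcyclic_iff_forall_adj_isBridge]
    intro u v huv
    rcases huv with h | h
    · exact key u v h
    · rw [Sym2.eq_swap]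
      exact key v u h
  · intro v
    have h1 : f '' (consecutive f).neighborSet v ⊆ {f v - 1, f v + 1} := by
      rintro _ ⟨w, hw, rfl⟩
      rcases hw with hw | hw
      · exact Or.inr hw.symm
      · exact Or.inl (by omega)
    calc ndeg (consecutive f) v = (f '' (consecutive f).neighborSet v).ncard :=
          (Set.ncard_image_of_injective _ hf).symm
      _ ≤ ({f v - 1, f v + 1} : Set ℕ).ncard := Set.ncard_le_ncard h1 (Set.toFinite _)
      _ ≤ ({f v + 1} : Set ℕ).ncard + 1 := Set.ncard_insert_le _ _
      _ = 2 := by rw [Set.ncard_singleton]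

lemma numPaths_consecutive_le [Fintype V] {f : V → ℕ} {k : ℕ} (hf : Function.Injective f)
    (hk : ∀ v, f v ≤ k) : numPaths (consecutive f) + Fintype.card V ≤ k + 2 := by
  classical
  set S : Finset V := {v | ∀ w, f w + 1 ≠ f v} with hS
  have hroot : ∀ n v, f v = n → ∃ s ∈ S, (consecutive f).Reachable s v := by
    intro n
    induction n using Nat.strong_induction_on with
    | _ n ih =>
      intro v hv
      by_cases hvS : v ∈ S
      · exact ⟨v, hvS, Reachable.refl v⟩
      · simp only [hS, Finset.mem_filter, Finset.mem_univ, true_and, not_forall, not_not] at hvS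
        obtain ⟨w, hw⟩ := hvS
        obtain ⟨s, hs, hsw⟩ := ih (f w) (by omega) w rfl
        exact ⟨s, hs, hsw.trans (Adj.reachable (Or.inl hw))⟩
  have h1 : numPaths (consecutive f) ≤ S.card := by
    have hsurj : Function.Surjective
        (fun s : S => (consecutive f).connectedComponentMk (s : V)) := by
      intro C
      obtain ⟨v, rfl⟩ := C.exists_rep
      obtain ⟨s, hs, hsv⟩ := hroot _ v rfl
      exact ⟨⟨s, hs⟩, ConnectedComponent.sound hsv⟩
    have := Nat.card_le_card_of_surjective _ hsurj
    simpa [numPaths] using this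
  have hdisj : Disjoint (S.image f) (Finset.univ.image (f · + 1)) := by
    rw [Finset.disjoint_left]
    intro i hi hi'
    obtain ⟨s, hs, rfl⟩ := Finset.mem_image.mp hi
    obtain ⟨w, -, hw⟩ := Finset.mem_image.mp hi'
    exact (Finset.mem_filter.mp hs).2 w hw
  have hsub : S.image f ∪ Finset.univ.image (f · + 1) ⊆ Finset.range (k + 2) := by
    intro i hi
    rcases Finset.mem_union.mp hi with hi | hi <;>
    · obtain ⟨w, -, rfl⟩ := Finset.mem_image.mp hi
      have := hk w
      rw [Finset.mem_range]
      omega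
  have h2 := Finset.card_le_card hsub
  rw [Finset.card_union_of_disjoint hdisj, Finset.card_image_of_injective _ hf,
    Finset.card_image_of_injective _ (fun a b hab => hf (Nat.succ_injective hab)),
    Finset.card_range, Finset.card_univ] at h2
  omega

lemma exists_isLinearForest_numPaths_eq (G : SimpleGraph V) :
    ∃ H ≤ G, IsLinearForest H ∧ numPaths H = pathCoverNumber G :=
  Nat.sInf_mem (s := {k | ∃ H ≤ G, IsLinearForest H ∧ numPaths H = k}) ⟨_, ⊥, bot_le, ⟨isAcyclic_bot, fun v => by simp [ndeg, neighborSet]⟩, rfl⟩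

lemma exists_isSpread_le_lambdaNum [Fintype V] (G : SimpleGraph V) :
    ∃ f, IsSpread G f ∧ ∀ v, f v ≤ lambdaNum G := by
  obtain ⟨f, hf, hk⟩ := exists_isSpread_of_path_cover (G := G) (H := ⊥) bot_le
    (fun v => by simp [ndeg, neighborSet])
  obtain ⟨g, hg, hgk⟩ := Nat.sInf_mem (s := {k | ∃ f : V → ℕ, IsL21Labeling G f ∧ ∀ v, f v ≤ k})
    ⟨Fintype.card V + numPaths (⊥ : SimpleGraph V), f, isL21Labeling_iff_isSpread.mpr hf,
      fun v => by have := hk v; omega⟩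
  exact ⟨g, isL21Labeling_iff_isSpread.mp hg, hgk⟩

lemma lambdaNum_le {G : SimpleGraph V} {f : V → ℕ} {k : ℕ} (hf : IsSpread G f)
    (hk : ∀ v, f v ≤ k) : lambdaNum G ≤ k :=
  Nat.sInf_le ⟨f, isL21Labeling_iff_isSpread.mpr hf, hk⟩

lemma IsSpread.exists_eq_lambdaNum [Nonempty V] {G : SimpleGraph V} {f : V → ℕ}
    (hf : IsSpread G f) (hk : ∀ v, f v ≤ lambdaNum G) : ∃ v, f v = lambdaNum G := by
  by_contra! hne
  have hlt : ∀ v, f v < lambdaNum G := fun v => lt_of_le_of_ne (hk v) (hne v)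
  have h1 := lambdaNum_le hf (k := lambdaNum G - 1) fun v => by have := hlt v; omega
  have := hlt (Classical.arbitrary V)
  omega

lemma IsSpread.exists_eq_zero [Nonempty V] {G : SimpleGraph V} {f : V → ℕ}
    (hf : IsSpread G f) (hk : ∀ v, f v ≤ lambdaNum G) : ∃ v, f v = 0 := by
  by_contra! hne
  have hsh : IsSpread G (fun v => f v - 1) := by
    refine ⟨fun u v huv => ?_, fun u v w huv h => hf.no_common u v w huv ?_⟩
    · have := hf.two_le u v huv
      have := hne u
      have := hne v
      omega
    · have := hne u
      have := hne v
      omega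
  have h1 := lambdaNum_le hsh (k := lambdaNum G - 1) fun v => by have := hk v; omega
  have h2 := hne (Classical.arbitrary V)
  have := hk (Classical.arbitrary V)
  omega

/-- The holes of a minimum-span labeling are all its unused labels. -/
lemma IsSpread.ncard_labHoles_add [Fintype V] [Nonempty V] {G : SimpleGraph V} {f : V → ℕ}
    (hf : IsSpread G f) (hk : ∀ v, f v ≤ lambdaNum G) :
    (labHoles G f).ncard + (Finset.univ.image f).card = lambdaNum G + 1 := by
  have heq : labHoles G f = ↑(Finset.range (lambdaNum G + 1) \ Finset.univ.image f) := by
    ext h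
    simp only [labHoles, Set.mem_ofPred_eq, Finset.coe_sdiff, Finset.coe_range, Finset.coe_image,
      Finset.coe_univ, Set.image_univ, Set.mem_sdiff, Set.mem_Iio, Set.mem_range, not_exists]
    refine ⟨fun ⟨_, h2, h3⟩ => ⟨by omega, h3⟩, fun ⟨h1, h2⟩ => ?_⟩
    obtain ⟨a, ha⟩ := hf.exists_eq_zero hk
    obtain ⟨b, hb⟩ := hf.exists_eq_lambdaNum hk
    have := h2 a
    have := h2 b
    exact ⟨by omega, by omega, h2⟩
  have hsub : Finset.univ.image f ⊆ Finset.range (lambdaNum G + 1) := fun i hi => by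
    obtain ⟨p, -, rfl⟩ := Finset.mem_image.mp hi
    exact Finset.mem_range.mpr (Nat.lt_succ_of_le (hk p))
  have h1 := Finset.card_sdiff_add_card_eq_card hsub
  rw [heq, Set.ncard_coe_finset, h1, Finset.card_range]

/-- **Theorem (Statement 18).** Let `G` be a graph on `n` vertices with
`λ(G) ≥ n − 1`.  Then `ρ(G) = P(Gᶜ) − 1`. -/
theorem holeIndex_eq_pathCoverNumber_complement {V : Type*} [Fintype V] [Nonempty V]
    (G : SimpleGraph V) (h : (Fintype.card V : ℤ) - 1 ≤ lambdaNum G) :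
    (holeIndex G : ℤ) = pathCoverNumber Gᶜ - 1 := by
  have hn : Fintype.card V ≤ lambdaNum G + 1 := by omega
  obtain ⟨f, hf, hfk⟩ := exists_isSpread_le_lambdaNum G
  obtain ⟨g, hg, hgk, hinj⟩ := hf.exists_injective hfk hn
  have hcover : pathCoverNumber Gᶜ + Fintype.card V ≤ lambdaNum G + 2 := by
    have h1 : pathCoverNumber Gᶜ ≤ numPaths (consecutive g) :=
      Nat.sInf_le ⟨_, consecutive_le_compl hg, isLinearForest_consecutive hinj, rfl⟩
    have h2 := numPaths_consecutive_le hinj hgk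
    omega
  have hspan : lambdaNum G + 2 ≤ Fintype.card V + pathCoverNumber Gᶜ := by
    obtain ⟨H, hH, hlin, hnum⟩ := exists_isLinearForest_numPaths_eq Gᶜ
    obtain ⟨f', hf', hk'⟩ := exists_isSpread_of_path_cover hH hlin.2
    rw [hnum] at hk'
    have h1 := lambdaNum_le hf' (k := Fintype.card V + pathCoverNumber Gᶜ - 2)
      fun v => by have := hk' v; omega
    have := hk' (Classical.arbitrary V)
    omega
  have hρ : holeIndex G + Fintype.card V = lambdaNum G + 1 := by
    have hgholes := hg.ncard_labHoles_add hgk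
    rw [Finset.card_image_of_injective _ hinj, Finset.card_univ] at hgholes
    have hmem : (labHoles G g).ncard ∈
        {k | ∃ f : V → ℕ, IsLambdaLabeling G f ∧ (labHoles G f).ncard = k} :=
      ⟨g, ⟨isL21Labeling_iff_isSpread.mpr hg, hgk, hg.exists_eq_lambdaNum hgk⟩, rfl⟩
    have hle : holeIndex G ≤ (labHoles G g).ncard := Nat.sInf_le hmem
    obtain ⟨f', ⟨hf', hk', -⟩, hcard⟩ := Nat.sInf_mem ⟨_, hmem⟩
    have h1 := (isL21Labeling_iff_isSpread.mp hf').ncard_labHoles_add hk'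
    have h2 : (Finset.univ.image f').card ≤ Fintype.card V := Finset.card_image_le
    rw [hcard] at h1
    change holeIndex G + _ = _ at h1
    omega
  omega

end PaperPC
end
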